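/- Let A = (A_1,…,A_n) be a nonnegative vector in ℝ^n and D = n + A_1 + ⋯ + A_n. Then for every continuously differentiable function f : ℝ^n → ℝ with compact support satisfying ∫_{ℝ^n_A} |f|^2 x^A dx = 1, one has ∫_{ℝ^n_A} |f|^2 log(|f|^2) x^A dx ≤ (D/2) · log( (2/(Π(A) e D)) ∫_{ℝ^n_A} |∇f|^2 x^A dx ), where log(|f|^2) is understood so that |f|^2 log(|f|^2) = 0 at points where f = 0. -/

import Mathlib

open MeasureTheory Real Filter

noncomputable section

/-- The positivity region `ℝ^n_A = {x : x_i > 0 whenever A_i > 0}`. -/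
def monSet {ι : Type*} [Fintype ι] (A : ι → ℝ) : Set (EuclideanSpace ℝ ι) :=
  {x | ∀ i, 0 < A i → 0 < x i}

/-- The monomial weight `x^A = ∏ |x_i|^{A_i}`. -/
def monWeight {ι : Type*} [Fintype ι] (A : ι → ℝ) (x : EuclideanSpace ℝ ι) : ℝ :=
  ∏ i, |x i| ^ A i

/-- The homogeneous dimension `D = n + A_1 + ⋯ + A_n`. -/
def monDim {ι : Type*} [Fintype ι] (A : ι → ℝ) : ℝ :=
  (Fintype.card ι : ℝ) + ∑ i, A i

/-- `k = #{i : A_i > 0}`. -/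
def monK {ι : Type*} [Fintype ι] (A : ι → ℝ) : ℕ :=
  Nat.card {i : ι // 0 < A i}

/-- `Π(A) = [ (∏ Γ((A_i+1)/2)) / 2^k ]^{2/D}`. -/
def monPi {ι : Type*} [Fintype ι] (A : ι → ℝ) : ℝ :=
  ((∏ i, Gamma ((A i + 1) / 2)) / 2 ^ monK A) ^ (2 / monDim A)

/-
For `t > 0` the probability measure proportional to `exp (-t ‖x‖² / 2) x^A dx` on `ℝ^n_A` is a
product of one-dimensional measures whose densities are strongly log-concave with modulus `t`. Each
factor satisfies the logarithmic Sobolev inequality with the Gaussian constant: transport `F r` to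
`r` by the monotone map `T`, take the logarithm of the Monge–Ampère equation, bound
`log T' ≤ T' - 1` and integrate by parts. Subadditivity of the entropy carries the inequality over
to the product.

Applied to the square of `f exp (t ‖x‖² / 4)`, it becomes an inequality for `x^A dx` in which the
second moments cancel. The weight is homogeneous, so Euler's identity evaluates the cross term
`∫ (x · ∇f²) x^A dx` as `-D ∫ f² x^A dx`, which leaves
`∫ f² log f² x^A dx ≤ (2 / t) ∫ |∇f|² x^A dx - D - log Z_t`, with `Z_t` the total mass of
`exp (-t ‖x‖² / 2) x^A dx`. The choice `t = 4 E / D`, `E = ∫ |∇f|² x^A dx`, is optimal.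
-/

section Entropy

open Set Topology

variable {α β : Type*} [MeasurableSpace α] [MeasurableSpace β] {μ : Measure α} {ν : Measure β}
  {a b : ℝ}

/-- The entropy `∫ F log F dμ - (∫ F dμ) log (∫ F dμ)` of a function with respect to a probability
measure. -/
def entropy (μ : Measure α) (F : α → ℝ) : ℝ :=
  ∫ x, F x * log (F x) ∂μ - (∫ x, F x ∂μ) * log (∫ x, F x ∂μ)

lemma integrable_comp_of_mem_Icc [IsFiniteMeasure μ] {φ : ℝ → ℝ} {G : α → ℝ}
    (hφ : ContinuousOn φ (Icc a b)) (hG : Measurable G) (hGab : ∀ x, G x ∈ Icc a b) :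
    Integrable (fun x => φ (G x)) μ := by
  obtain ⟨C, hC⟩ := isCompact_Icc.exists_bound_of_continuousOn hφ
  have hmeas : Measurable fun x => φ (G x) :=
    (continuousOn_iff_continuous_domRestrict.1 hφ).measurable.comp (hG.subtype_mk (h := hGab))
  exact .of_bound hmeas.aestronglyMeasurable C (ae_of_all _ fun x => hC _ (hGab x))

lemma integrable_of_mem_Icc [IsFiniteMeasure μ] {G : α → ℝ} (hG : Measurable G)
    (hGab : ∀ x, G x ∈ Icc a b) : Integrable G μ :=
  integrable_comp_of_mem_Icc continuousOn_id hG hGab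

lemma integrable_mul_of_mem_Icc {G H : α → ℝ} (hH : Integrable H μ) (hG : Measurable G)
    (hGab : ∀ x, G x ∈ Icc a b) : Integrable (fun x => G x * H x) μ :=
  hH.bdd_mul hG.aestronglyMeasurable (ae_of_all _ fun x => abs_le_max_abs_abs (hGab x).1 (hGab x).2)

lemma integral_mem_Icc [IsProbabilityMeasure μ] {G : α → ℝ} (hG : Measurable G)
    (hGab : ∀ x, G x ∈ Icc a b) : ∫ x, G x ∂μ ∈ Icc a b :=
  (convex_Icc a b).integral_mem isClosed_Icc (ae_of_all _ hGab) (integrable_of_mem_Icc hG hGab)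

lemma continuousOn_log_Icc (ha : 0 < a) : ContinuousOn log (Icc a b) :=
  continuousOn_log.mono fun _ hx => (ha.trans_le hx.1).ne'

lemma entropy_map {f : α → β} {F : β → ℝ} (hf : Measurable f) (hF : Measurable F) :
    entropy (μ.map f) F = entropy μ (fun x => F (f x)) := by
  have hmap : ∀ {G : β → ℝ}, Measurable G → ∫ y, G y ∂(μ.map f) = ∫ x, G (f x) ∂μ := fun hG =>
    integral_map hf.aemeasurable hG.aestronglyMeasurable
  rw [entropy, entropy, hmap hF, hmap (G := fun y => F y * log (F y)) (hF.mul hF.log)]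

lemma integral_mul_log_sub_log_integral_le_entropy [IsProbabilityMeasure μ] {G H : α → ℝ}
    (ha : 0 < a) (hG : Measurable G) (hGab : ∀ x, G x ∈ Icc a b) (hH : Measurable H)
    (hHab : ∀ x, H x ∈ Icc a b) :
    ∫ x, G x * (log (H x) - log (∫ y, H y ∂μ)) ∂μ ≤ entropy μ G := by
  set m := ∫ x, G x ∂μ
  set h := ∫ x, H x ∂μ with hh
  have hm0 : 0 < m := ha.trans_le (integral_mem_Icc hG hGab).1
  have hh0 : 0 < h := ha.trans_le (integral_mem_Icc hH hHab).1
  have hGi : Integrable G μ := integrable_of_mem_Icc hG hGab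
  have hHi : Integrable H μ := integrable_of_mem_Icc hH hHab
  have hGG : Integrable (fun x => G x * log (G x)) μ :=
    integrable_comp_of_mem_Icc continuous_mul_log.continuousOn hG hGab
  have hpt : ∀ x, G x * (log (H x) - log h) ≤
      G x * log (G x) - G x * log m + (H x * (m / h) - G x) := by
    intro x
    have hGx : 0 < G x := ha.trans_le (hGab x).1
    have hHx : 0 < H x := ha.trans_le (hHab x).1
    have hlog := mul_le_mul_of_nonneg_left
      (log_le_sub_one_of_pos (show 0 < H x * m / (h * G x) by positivity)) hGx.le
    rw [log_div (by positivity) (by positivity), log_mul hHx.ne' hm0.ne',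
      log_mul hh0.ne' hGx.ne'] at hlog
    have hcancel : G x * (H x * m / (h * G x) - 1) = H x * (m / h) - G x := by field_simp
    linarith
  have hGH : Integrable (fun x => G x * (log (H x) - log h)) μ :=
    integrable_mul_of_mem_Icc
      ((integrable_comp_of_mem_Icc (continuousOn_log_Icc ha) hH hHab).sub (integrable_const _))
      hG hGab
  have hGm : Integrable (fun x => G x * log m) μ := hGi.mul_const _
  have hHm : Integrable (fun x => H x * (m / h)) μ := hHi.mul_const _
  have hent : Integrable (fun x => G x * log (G x) - G x * log m) μ := hGG.sub hGm
  have hzero : Integrable (fun x => H x * (m / h) - G x) μ := hHm.sub hGi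
  calc ∫ x, G x * (log (H x) - log h) ∂μ
      ≤ ∫ x, (G x * log (G x) - G x * log m + (H x * (m / h) - G x)) ∂μ :=
        integral_mono hGH (hent.add hzero) hpt
    _ = entropy μ G := by
        rw [integral_add hent hzero, integral_sub hGG hGm, integral_sub hHm hGi,
          integral_mul_const, integral_mul_const, ← hh, mul_div_cancel₀ _ hh0.ne', sub_self,
          add_zero, entropy]

lemma tendsto_entropy_add_const [IsFiniteMeasure μ] {G : α → ℝ} (hG : Measurable G)
    (hGab : ∀ x, G x ∈ Icc a b) :
    Tendsto (fun ε => entropy μ fun x => G x + ε) (𝓝 0) (𝓝 (entropy μ G)) := by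
  obtain ⟨C, hC⟩ := (isCompact_Icc (a := a - 1) (b := b + 1)).exists_bound_of_continuousOn
    continuous_mul_log.continuousOn
  have hsmall : ∀ᶠ ε : ℝ in 𝓝 0, ε ∈ Icc (-1 : ℝ) 1 := Icc_mem_nhds (by simp) (by simp)
  have h_int : Tendsto (fun ε => ∫ x, (G x + ε) ∂μ) (𝓝 0) (𝓝 (∫ x, G x ∂μ)) := by
    simp_rw [integral_add (integrable_of_mem_Icc hG hGab) (integrable_const _), integral_const]
    exact Continuous.tendsto' (by fun_prop) _ _ (by simp)
  have hintlog : Tendsto (fun ε => ∫ x, (G x + ε) * log (G x + ε) ∂μ) (𝓝 0)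
      (𝓝 (∫ x, G x * log (G x) ∂μ)) := by
    refine tendsto_integral_filter_of_dominated_convergence (fun _ => C)
      (.of_forall fun ε => by fun_prop) (hsmall.mono fun ε hε => ae_of_all _ fun x => ?_)
      (integrable_const C) (ae_of_all _ fun x => ?_)
    · exact hC _ ⟨by linarith [(hGab x).1, hε.1], by linarith [(hGab x).2, hε.2]⟩
    · exact (continuous_mul_log.comp (by fun_prop : Continuous fun ε => G x + ε)).tendsto' _ _
        (by simp)
  exact hintlog.sub ((continuous_mul_log.tendsto _).comp h_int)

variable [IsProbabilityMeasure μ] [IsProbabilityMeasure ν] {F : α × β → ℝ}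

lemma integrable_entropy_prodMk (hF : Measurable F) (hFab : ∀ p, F p ∈ Icc a b) :
    Integrable (fun x => entropy ν fun y => F (x, y)) μ := by
  refine Integrable.sub ?_ ?_
  · exact (integrable_comp_of_mem_Icc continuous_mul_log.continuousOn hF hFab).integral_prod_left
  · exact integrable_comp_of_mem_Icc continuous_mul_log.continuousOn
      hF.stronglyMeasurable.integral_prod_right'.measurable
      fun x => integral_mem_Icc (by fun_prop) fun y => hFab (x, y)

lemma entropy_prod (hF : Measurable F) (hFab : ∀ p, F p ∈ Icc a b) :
    entropy (μ.prod ν) F =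
      ∫ y, entropy μ (fun x => F (x, y)) ∂ν + entropy ν (fun y => ∫ x, F (x, y) ∂μ) := by
  have hm : Measurable fun y => ∫ x, F (x, y) ∂μ :=
    hF.stronglyMeasurable.integral_prod_left'.measurable
  have hmab : ∀ y, ∫ x, F (x, y) ∂μ ∈ Icc a b := fun y =>
    integral_mem_Icc (by fun_prop) fun x => hFab (x, y)
  have hFi : Integrable F (μ.prod ν) := integrable_of_mem_Icc hF hFab
  have hFl : Integrable (fun p => F p * log (F p)) (μ.prod ν) :=
    integrable_comp_of_mem_Icc continuous_mul_log.continuousOn hF hFab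
  have hml : Integrable (fun y => (∫ x, F (x, y) ∂μ) * log (∫ x, F (x, y) ∂μ)) ν :=
    integrable_comp_of_mem_Icc continuous_mul_log.continuousOn hm hmab
  simp only [entropy]
  rw [integral_sub hFl.integral_prod_right hml, integral_prod_symm _ hFl, integral_prod_symm _ hFi]
  ring

lemma entropy_integral_le (ha : 0 < a) (hF : Measurable F) (hFab : ∀ p, F p ∈ Icc a b) :
    entropy ν (fun y => ∫ x, F (x, y) ∂μ) ≤ ∫ x, entropy ν (fun y => F (x, y)) ∂μ := by
  set m := fun y => ∫ x, F (x, y) ∂μ with hm_def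
  set M := ∫ y, m y ∂ν
  have hm : Measurable m := hF.stronglyMeasurable.integral_prod_left'.measurable
  have hmab : ∀ y, m y ∈ Icc a b := fun y => integral_mem_Icc (by fun_prop) fun x => hFab (x, y)
  have hlog : Integrable (fun y => log (m y) - log M) ν :=
    (integrable_comp_of_mem_Icc (continuousOn_log_Icc ha) hm hmab).sub (integrable_const _)
  have hFlog : Integrable (fun p : α × β => F p * (log (m p.2) - log M)) (μ.prod ν) :=
    integrable_mul_of_mem_Icc (hlog.comp_snd μ) hF hFab
  calc entropy ν m = ∫ y, m y * (log (m y) - log M) ∂ν := by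
        have hmm : Integrable (fun y => m y * log (m y)) ν :=
          integrable_comp_of_mem_Icc continuous_mul_log.continuousOn hm hmab
        simp only [mul_sub]
        rw [integral_sub hmm ((integrable_of_mem_Icc hm hmab).mul_const _), integral_mul_const,
          entropy]
    _ = ∫ x, ∫ y, F (x, y) * (log (m y) - log M) ∂ν ∂μ := by
        rw [integral_integral_swap hFlog]
        simp only [integral_mul_const, hm_def]
    _ ≤ ∫ x, entropy ν (fun y => F (x, y)) ∂μ :=
        integral_mono hFlog.integral_prod_left (integrable_entropy_prodMk hF hFab) fun x =>
          integral_mul_log_sub_log_integral_le_entropy ha (by fun_prop) (fun y => hFab (x, y))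
            hm hmab

end Entropy

section HasLogSobolev

open Set Topology

variable {E E' G : Type*} [NormedAddCommGroup E] [NormedSpace ℝ E]
  [NormedAddCommGroup E'] [NormedSpace ℝ E'] {F : E → ℝ} {t : ℝ}

/-- Test functions for the logarithmic Sobolev inequality: `C¹` functions with bounded derivative
and with values in a compact interval of positive reals. -/
structure IsLogSobolevTest (F : E → ℝ) : Prop where
  contDiff : ContDiff ℝ 1 F
  exists_mem_Icc : ∃ a b, 0 < a ∧ ∀ x, F x ∈ Icc a b
  exists_norm_fderiv_le : ∃ C, ∀ x, ‖fderiv ℝ F x‖ ≤ C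

/-- The logarithmic Sobolev inequality with constant `t`, in the form `Ent(F) ≤ (2t)⁻¹ I(F)` with
the Fisher information `I(F) = ∫ |∇F|² / F dμ`. -/
def HasLogSobolev [MeasurableSpace E] (μ : Measure E) (t : ℝ) : Prop :=
  ∀ F : E → ℝ, IsLogSobolevTest F →
    entropy μ F ≤ (2 * t)⁻¹ * ∫ x, ‖fderiv ℝ F x‖ ^ 2 / F x ∂μ

lemma norm_fderiv_sq_add_const {g : E → ℝ} (hg : Differentiable ℝ g) (ε : ℝ) (x : E) :
    ‖fderiv ℝ (fun y => g y ^ 2 + ε) x‖ = 2 * |g x| * ‖fderiv ℝ g x‖ := by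
  have hderiv : fderiv ℝ (fun y => g y ^ 2 + ε) x = (2 * g x) • fderiv ℝ g x := by
    simpa using (((hg x).hasFDerivAt.pow 2).add_const ε).fderiv
  rw [hderiv, norm_smul, norm_mul, norm_ofNat, norm_eq_abs]

namespace IsLogSobolevTest

lemma pos (hF : IsLogSobolevTest F) (x : E) : 0 < F x := by
  obtain ⟨a, b, ha, hab⟩ := hF.exists_mem_Icc
  exact ha.trans_le (hab x).1

lemma differentiable (hF : IsLogSobolevTest F) : Differentiable ℝ F :=
  hF.contDiff.differentiable one_ne_zero

lemma continuous_fderiv (hF : IsLogSobolevTest F) : Continuous (fderiv ℝ F) :=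
  hF.contDiff.continuous_fderiv one_ne_zero

lemma comp (hF : IsLogSobolevTest F) {g : E' → E} (hg : ContDiff ℝ 1 g)
    (hg' : ∃ C, ∀ x, ‖fderiv ℝ g x‖ ≤ C) : IsLogSobolevTest fun x => F (g x) := by
  obtain ⟨a, b, ha, hab⟩ := hF.exists_mem_Icc
  obtain ⟨C, hC⟩ := hF.exists_norm_fderiv_le
  obtain ⟨C', hC'⟩ := hg'
  refine ⟨hF.contDiff.comp hg, ⟨a, b, ha, fun x => hab (g x)⟩, C * C', fun x => ?_⟩
  rw [fderiv_fun_comp x (hF.differentiable _) (hg.differentiable one_ne_zero x)]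
  refine (ContinuousLinearMap.opNorm_comp_le _ _).trans ?_
  exact mul_le_mul (hC _) (hC' x) (norm_nonneg _) ((norm_nonneg _).trans (hC (g x)))

lemma comp_continuousLinearMap (hF : IsLogSobolevTest F) (L : E' →L[ℝ] E) :
    IsLogSobolevTest fun x => F (L x) :=
  hF.comp L.contDiff ⟨‖L‖, fun x => by rw [L.fderiv]⟩

lemma integrable_norm_sq_fderiv_comp_div [MeasurableSpace E] [OpensMeasurableSpace E]
    {μ : Measure E} [IsFiniteMeasure μ] (hF : IsLogSobolevTest F) (L : E' →L[ℝ] E) :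
    Integrable (fun x => ‖(fderiv ℝ F x).comp L‖ ^ 2 / F x) μ := by
  obtain ⟨a, b, ha, hab⟩ := hF.exists_mem_Icc
  obtain ⟨C, hC⟩ := hF.exists_norm_fderiv_le
  have hcont : Continuous fun x => ‖(fderiv ℝ F x).comp L‖ ^ 2 / F x :=
    ((hF.continuous_fderiv.clm_comp continuous_const).norm.pow 2).div hF.contDiff.continuous
      fun x => (hF.pos x).ne'
  refine .of_bound hcont.aestronglyMeasurable ((C * ‖L‖) ^ 2 / a) (ae_of_all _ fun x => ?_)
  rw [norm_of_nonneg (div_nonneg (sq_nonneg _) (hF.pos x).le)]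
  gcongr
  · exact (ContinuousLinearMap.opNorm_comp_le _ _).trans (by gcongr; exact hC x)
  · exact (hab x).1

lemma integrable_norm_sq_fderiv_div [MeasurableSpace E] [OpensMeasurableSpace E]
    {μ : Measure E} [IsFiniteMeasure μ] (hF : IsLogSobolevTest F) :
    Integrable (fun x => ‖fderiv ℝ F x‖ ^ 2 / F x) μ :=
  hF.integrable_norm_sq_fderiv_comp_div (.id ℝ E)

lemma sq_add_const {g : E → ℝ} (hg : ContDiff ℝ 1 g) {M C : ℝ} (hM : ∀ x, |g x| ≤ M)
    (hC : ∀ x, ‖fderiv ℝ g x‖ ≤ C) {ε : ℝ} (hε : 0 < ε) :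
    IsLogSobolevTest fun x => g x ^ 2 + ε := by
  refine ⟨by fun_prop, ⟨ε, M ^ 2 + ε, hε, fun x => ⟨by nlinarith, ?_⟩⟩, 2 * M * C, fun x => ?_⟩
  · linarith [sq_le_sq' (abs_le.1 (hM x)).1 (abs_le.1 (hM x)).2]
  · rw [norm_fderiv_sq_add_const (hg.differentiable one_ne_zero)]
    have := (abs_nonneg _).trans (hM x)
    gcongr
    exacts [hM x, hC x]

end IsLogSobolevTest

lemma fderiv_comp_prodMk_left {F : E × E' → ℝ} (hF : Differentiable ℝ F) (x : E) (y : E') :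
    fderiv ℝ (fun x => F (x, y)) x = (fderiv ℝ F (x, y)).comp (.inl ℝ E E') :=
  ((hF (x, y)).hasFDerivAt.comp x (hasFDerivAt_prodMk_left x y)).fderiv

lemma fderiv_comp_prodMk_right {F : E × E' → ℝ} (hF : Differentiable ℝ F) (x : E) (y : E') :
    fderiv ℝ (fun y => F (x, y)) y = (fderiv ℝ F (x, y)).comp (.inr ℝ E E') :=
  ((hF (x, y)).hasFDerivAt.comp y (hasFDerivAt_prodMk_right x y)).fderiv

lemma HasLogSobolev.entropy_prodMk_left_le [MeasurableSpace E] {μ : Measure E}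
    (hμ : HasLogSobolev μ t) {F : E × E' → ℝ} (hF : IsLogSobolevTest F) (y : E') :
    entropy μ (fun x => F (x, y)) ≤
      (2 * t)⁻¹ * ∫ x, ‖(fderiv ℝ F (x, y)).comp (.inl ℝ E E')‖ ^ 2 / F (x, y) ∂μ := by
  have hslice : IsLogSobolevTest fun x => F (x, y) :=
    hF.comp (contDiff_prodMk_left y) ⟨‖ContinuousLinearMap.inl ℝ E E'‖, fun x => by
      rw [(hasFDerivAt_prodMk_left x y).fderiv]⟩
  simpa only [fderiv_comp_prodMk_left hF.differentiable] using hμ _ hslice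

lemma HasLogSobolev.entropy_prodMk_right_le [MeasurableSpace E'] {ν : Measure E'}
    (hν : HasLogSobolev ν t) {F : E × E' → ℝ} (hF : IsLogSobolevTest F) (x : E) :
    entropy ν (fun y => F (x, y)) ≤
      (2 * t)⁻¹ * ∫ y, ‖(fderiv ℝ F (x, y)).comp (.inr ℝ E E')‖ ^ 2 / F (x, y) ∂ν := by
  have hslice : IsLogSobolevTest fun y => F (x, y) :=
    hF.comp (contDiff_prodMk_right x) ⟨‖ContinuousLinearMap.inr ℝ E E'‖, fun y => by
      rw [(hasFDerivAt_prodMk_right x y).fderiv]⟩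
  simpa only [fderiv_comp_prodMk_right hF.differentiable] using hν _ hslice

lemma HasLogSobolev.entropy_prod_le [MeasurableSpace E] [BorelSpace E] [MeasurableSpace E']
    [BorelSpace E'] [SecondCountableTopologyEither E E'] {μ : Measure E} {ν : Measure E'}
    [IsProbabilityMeasure μ] [IsProbabilityMeasure ν] (hμ : HasLogSobolev μ t)
    (hν : HasLogSobolev ν t) {F : E × E' → ℝ} (hF : IsLogSobolevTest F) :
    entropy (μ.prod ν) F ≤ (2 * t)⁻¹ * ∫ p, (‖(fderiv ℝ F p).comp (.inl ℝ E E')‖ ^ 2 / F p +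
      ‖(fderiv ℝ F p).comp (.inr ℝ E E')‖ ^ 2 / F p) ∂(μ.prod ν) := by
  obtain ⟨a, b, ha, hab⟩ := hF.exists_mem_Icc
  have hFm : Measurable F := hF.contDiff.continuous.measurable
  have hI₁ := hF.integrable_norm_sq_fderiv_comp_div (μ := μ.prod ν) (.inl ℝ E E')
  have hI₂ := hF.integrable_norm_sq_fderiv_comp_div (μ := μ.prod ν) (.inr ℝ E E')
  calc entropy (μ.prod ν) F
      ≤ ∫ y, entropy μ (fun x => F (x, y)) ∂ν + ∫ x, entropy ν (fun y => F (x, y)) ∂μ := by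
        rw [entropy_prod hFm hab]
        gcongr
        exact entropy_integral_le ha hFm hab
    _ ≤ (2 * t)⁻¹ * ∫ y, ∫ x, ‖(fderiv ℝ F (x, y)).comp (.inl ℝ E E')‖ ^ 2 / F (x, y) ∂μ ∂ν +
        (2 * t)⁻¹ * ∫ x, ∫ y, ‖(fderiv ℝ F (x, y)).comp (.inr ℝ E E')‖ ^ 2 / F (x, y) ∂ν ∂μ := by
        rw [← integral_const_mul, ← integral_const_mul]
        gcongr
        · exact integrable_entropy_prodMk (F := fun p : E' × E => F (p.2, p.1)) (by fun_prop)
            fun p => hab (p.2, p.1)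
        · exact hI₁.integral_prod_right.const_mul _
        · exact fun y => hμ.entropy_prodMk_left_le hF y
        · exact integrable_entropy_prodMk hFm hab
        · exact hI₂.integral_prod_left.const_mul _
        · exact fun x => hν.entropy_prodMk_right_le hF x
    _ = _ := by
        rw [integral_add hI₁ hI₂, integral_prod_symm _ hI₁, integral_prod _ hI₂, mul_add]

lemma norm_sq_add_norm_sq_le_of_add_le {E E' : Type*} [NormedAddCommGroup E]
    [InnerProductSpace ℝ E] [CompleteSpace E] [NormedAddCommGroup E'] [InnerProductSpace ℝ E']
    [CompleteSpace E'] {a : E →L[ℝ] ℝ} {b : E' →L[ℝ] ℝ} {c : ℝ}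
    (h : ∀ u v, a u + b v ≤ c * √(‖u‖ ^ 2 + ‖v‖ ^ 2)) : ‖a‖ ^ 2 + ‖b‖ ^ 2 ≤ c ^ 2 := by
  obtain ⟨u, rfl⟩ := (InnerProductSpace.toDual ℝ E).surjective a
  obtain ⟨v, rfl⟩ := (InnerProductSpace.toDual ℝ E').surjective b
  have huv := h u v
  simp only [InnerProductSpace.toDual_apply_apply, real_inner_self_eq_norm_sq,
    LinearIsometryEquiv.norm_map] at huv ⊢
  set s := ‖u‖ ^ 2 + ‖v‖ ^ 2
  have hs : 0 ≤ s := by positivity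
  rcases hs.eq_or_lt with hs0 | hs0
  · rw [← hs0]
    positivity
  · have hle : √s ≤ c := by
      refine le_of_mul_le_mul_right ?_ (sqrt_pos.2 hs0)
      rwa [mul_self_sqrt hs]
    exact (sqrt_le_left ((sqrt_nonneg _).trans hle)).1 hle

namespace HasLogSobolev

variable [MeasurableSpace E] [MeasurableSpace E'] {μ : Measure E}

lemma of_subsingleton [Subsingleton E] [IsProbabilityMeasure μ] : HasLogSobolev μ t := by
  intro F _
  have hconst : F = fun _ => F 0 := funext fun x => congrArg F (Subsingleton.elim x 0)
  rw [hconst]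
  simp [entropy]

lemma map [BorelSpace E] [BorelSpace E'] [IsFiniteMeasure μ] (hμ : HasLogSobolev μ t)
    (ht : 0 ≤ t) (L : E →L[ℝ] E') (hL : ‖L‖ ≤ 1) : HasLogSobolev (μ.map L) t := by
  intro F hF
  have hFL := hF.comp_continuousLinearMap L
  have hLm : Measurable L := L.continuous.measurable
  have hFm : Measurable F := hF.contDiff.continuous.measurable
  have hfisher : ∀ x, ‖fderiv ℝ (fun y => F (L y)) x‖ ^ 2 / F (L x) ≤
      ‖fderiv ℝ F (L x)‖ ^ 2 / F (L x) := by
    intro x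
    rw [fderiv_fun_comp x (hF.differentiable _) L.differentiableAt, L.fderiv]
    gcongr
    · exact (hF.pos _).le
    · exact (ContinuousLinearMap.opNorm_comp_le _ _).trans
        (mul_le_of_le_one_right (norm_nonneg _) hL)
  have h_int := hF.integrable_norm_sq_fderiv_div (μ := μ.map L)
  calc entropy (μ.map L) F = entropy μ (fun x => F (L x)) := entropy_map hLm hFm
    _ ≤ (2 * t)⁻¹ * ∫ x, ‖fderiv ℝ (fun y => F (L y)) x‖ ^ 2 / F (L x) ∂μ := hμ _ hFL
    _ ≤ (2 * t)⁻¹ * ∫ x, ‖fderiv ℝ F (L x)‖ ^ 2 / F (L x) ∂μ := by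
        gcongr
        exacts [hFL.integrable_norm_sq_fderiv_div, h_int.comp_measurable hLm, hfisher]
    _ = (2 * t)⁻¹ * ∫ x, ‖fderiv ℝ F x‖ ^ 2 / F x ∂(μ.map L) := by
        rw [integral_map hLm.aemeasurable h_int.aestronglyMeasurable]

lemma map_prod {E E' : Type*} [NormedAddCommGroup E] [InnerProductSpace ℝ E] [CompleteSpace E]
    [MeasurableSpace E] [BorelSpace E] [NormedAddCommGroup E'] [InnerProductSpace ℝ E']
    [CompleteSpace E'] [MeasurableSpace E'] [BorelSpace E'] [SecondCountableTopologyEither E E']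
    [NormedAddCommGroup G] [NormedSpace ℝ G] [MeasurableSpace G] [BorelSpace G]
    {μ : Measure E} {ν : Measure E'} [IsProbabilityMeasure μ] [IsProbabilityMeasure ν]
    (hμ : HasLogSobolev μ t) (hν : HasLogSobolev ν t) (ht : 0 ≤ t) (L : E × E' →L[ℝ] G)
    (hL : ∀ p, ‖L p‖ ≤ √(‖p.1‖ ^ 2 + ‖p.2‖ ^ 2)) : HasLogSobolev ((μ.prod ν).map L) t := by
  intro F hF
  have hFL := hF.comp_continuousLinearMap L
  have hLm : Measurable L := L.continuous.measurable
  have hFm : Measurable F := hF.contDiff.continuous.measurable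
  have h_int := hF.integrable_norm_sq_fderiv_div (μ := (μ.prod ν).map L)
  have hpythagoras : ∀ p, ‖(fderiv ℝ (fun q => F (L q)) p).comp (.inl ℝ E E')‖ ^ 2 +
      ‖(fderiv ℝ (fun q => F (L q)) p).comp (.inr ℝ E E')‖ ^ 2 ≤ ‖fderiv ℝ F (L p)‖ ^ 2 := by
    intro p
    rw [fderiv_fun_comp p (hF.differentiable _) L.differentiableAt, L.fderiv]
    refine norm_sq_add_norm_sq_le_of_add_le fun u v => ?_
    calc fderiv ℝ F (L p) (L (u, 0)) + fderiv ℝ F (L p) (L (0, v))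
        = fderiv ℝ F (L p) (L (u, v)) := by rw [← map_add, ← map_add]; simp
      _ ≤ ‖fderiv ℝ F (L p)‖ * ‖L (u, v)‖ := (le_abs_self _).trans ((fderiv ℝ F (L p)).le_opNorm _)
      _ ≤ ‖fderiv ℝ F (L p)‖ * √(‖u‖ ^ 2 + ‖v‖ ^ 2) := by gcongr; exact hL (u, v)
  calc entropy ((μ.prod ν).map L) F = entropy (μ.prod ν) (fun p => F (L p)) := entropy_map hLm hFm
    _ ≤ _ := hμ.entropy_prod_le hν hFL
    _ ≤ (2 * t)⁻¹ * ∫ p, ‖fderiv ℝ F (L p)‖ ^ 2 / F (L p) ∂(μ.prod ν) := by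
        gcongr
        · exact (hFL.integrable_norm_sq_fderiv_comp_div _).add
            (hFL.integrable_norm_sq_fderiv_comp_div _)
        · exact h_int.comp_measurable hLm
        · intro p
          dsimp only
          rw [← add_div]
          exact div_le_div_of_nonneg_right (hpythagoras p) (hFL.pos p).le
    _ = (2 * t)⁻¹ * ∫ x, ‖fderiv ℝ F x‖ ^ 2 / F x ∂((μ.prod ν).map L) := by
        rw [integral_map hLm.aemeasurable h_int.aestronglyMeasurable]

lemma map_toLp_pi_congr {ι κ : Type*} [Fintype ι] [Fintype κ] (e : ι ≃ κ) {m : κ → Measure ℝ}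
    [∀ k, IsProbabilityMeasure (m k)] (ht : 0 ≤ t)
    (h : HasLogSobolev
      ((Measure.pi fun i => m (e i)).map (WithLp.toLp 2) : Measure (EuclideanSpace ℝ ι)) t) :
    HasLogSobolev ((Measure.pi m).map (WithLp.toLp 2) : Measure (EuclideanSpace ℝ κ)) t := by
  let L := LinearIsometryEquiv.piLpCongrLeft 2 ℝ ℝ e
  have hmeas : Measurable (WithLp.toLp 2 : (ι → ℝ) → EuclideanSpace ℝ ι) := by fun_prop
  have hmeas' : Measurable (WithLp.toLp 2 : (κ → ℝ) → EuclideanSpace ℝ κ) := by fun_prop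
  have hpi := measurePreserving_piCongrLeft m e
  have hmap : (Measure.pi m).map (WithLp.toLp 2) =
      ((Measure.pi fun i => m (e i)).map (WithLp.toLp 2)).map (L : _ →L[ℝ] _) := by
    rw [← hpi.map_eq, Measure.map_map hmeas' hpi.measurable, Measure.map_map _ hmeas]
    · congr 1
      funext x
      ext k
      simp [L, MeasurableEquiv.piCongrLeft, Equiv.piCongrLeft]
    · exact L.continuous.measurable
  have := Measure.isProbabilityMeasure_map
    (μ := Measure.pi fun i => m (e i)) hmeas.aemeasurable
  rw [hmap]
  exact h.map ht _ L.toLinearIsometry.norm_toContinuousLinearMap_le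

/-- The linear map `(x, s) ↦ (s, x)` adjoining the coordinate `s` at index `none` to `x`. -/
def optionConsCLM (ι : Type*) [Fintype ι] :
    EuclideanSpace ℝ ι × ℝ →L[ℝ] EuclideanSpace ℝ (Option ι) :=
  LinearMap.toContinuousLinearMap
    { toFun := fun p => WithLp.toLp 2 fun o => o.elim p.2 p.1
      map_add' := fun p q => by ext (_ | i) <;> rfl
      map_smul' := fun c p => by ext (_ | i) <;> rfl }

lemma map_toLp_pi_option {ι : Type*} [Fintype ι] {m : Option ι → Measure ℝ}
    [∀ o, IsProbabilityMeasure (m o)] (ht : 0 ≤ t) (hnone : HasLogSobolev (m none) t)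
    (hsome : HasLogSobolev
      ((Measure.pi fun i => m (some i)).map (WithLp.toLp 2) : Measure (EuclideanSpace ℝ ι)) t) :
    HasLogSobolev
      ((Measure.pi m).map (WithLp.toLp 2) : Measure (EuclideanSpace ℝ (Option ι))) t := by
  have hmeas : Measurable (WithLp.toLp 2 : (ι → ℝ) → EuclideanSpace ℝ ι) := by fun_prop
  have hmeas' : Measurable (WithLp.toLp 2 : (Option ι → ℝ) → EuclideanSpace ℝ (Option ι)) := by
    fun_prop
  have hL : ∀ p, ‖optionConsCLM ι p‖ ≤ √(‖p.1‖ ^ 2 + ‖p.2‖ ^ 2) := by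
    intro p
    rw [EuclideanSpace.norm_eq, Fintype.sum_option, EuclideanSpace.norm_sq_eq, add_comm]
    rfl
  have hmap : (Measure.pi m).map (WithLp.toLp 2) =
      (((Measure.pi fun i => m (some i)).map (WithLp.toLp 2)).prod (m none)).map
        (optionConsCLM ι) := by
    have h := Measure.map_prod_map (Measure.pi fun i => m (some i)) (m none) hmeas measurable_id
    rw [Measure.map_id] at h
    rw [h, ← Measure.pi_map_piOptionEquivProd,
      Measure.map_map hmeas' (MeasurableEquiv.measurable _),
      Measure.map_map (optionConsCLM ι).continuous.measurable (hmeas.prodMap measurable_id)]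
    congr 1
    funext p
    ext (_ | i) <;> rfl
  have := Measure.isProbabilityMeasure_map
    (μ := Measure.pi fun i => m (some i)) hmeas.aemeasurable
  rw [hmap]
  exact hsome.map_prod hnone ht _ hL

lemma map_toLp_pi {ι : Type*} [Fintype ι] {m : ι → Measure ℝ} [∀ i, IsProbabilityMeasure (m i)]
    (hm : ∀ i, HasLogSobolev (m i) t) (ht : 0 ≤ t) :
    HasLogSobolev ((Measure.pi m).map (WithLp.toLp 2) : Measure (EuclideanSpace ℝ ι)) t := by
  revert m
  refine Fintype.induction_empty_option (P := fun ι _ => ∀ {m : ι → Measure ℝ}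
    [∀ i, IsProbabilityMeasure (m i)], (∀ i, HasLogSobolev (m i) t) → HasLogSobolev
      ((Measure.pi m).map (WithLp.toLp 2) : Measure (EuclideanSpace ℝ ι)) t) ?_ ?_ ?_ ι
  · intro α β _ e ih m _ hm
    let := Fintype.ofEquiv β e.symm
    exact map_toLp_pi_congr e ht (ih fun i => hm (e i))
  · intro m _ _
    have := Measure.isProbabilityMeasure_map (μ := Measure.pi m)
      (f := (WithLp.toLp 2 : (PEmpty → ℝ) → EuclideanSpace ℝ PEmpty)) (by fun_prop)
    exact of_subsingleton
  · exact fun α _ ih m _ hm => map_toLp_pi_option ht (hm none) (ih fun i => hm (some i))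

lemma entropy_sq_le [BorelSpace E] [IsFiniteMeasure μ] (hμ : HasLogSobolev μ t) (ht : 0 < t)
    {g : E → ℝ} (hg : ContDiff ℝ 1 g) {M C : ℝ} (hM : ∀ x, |g x| ≤ M)
    (hC : ∀ x, ‖fderiv ℝ g x‖ ≤ C) :
    entropy μ (fun x => g x ^ 2) ≤ 2 / t * ∫ x, ‖fderiv ℝ g x‖ ^ 2 ∂μ := by
  have hlim : Tendsto (fun ε => entropy μ fun x => g x ^ 2 + ε) (𝓝[>] 0)
      (𝓝 (entropy μ fun x => g x ^ 2)) :=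
    (tendsto_entropy_add_const (hg.continuous.measurable.pow_const 2) fun x =>
      ⟨sq_nonneg _, sq_le_sq' (abs_le.1 (hM x)).1 (abs_le.1 (hM x)).2⟩).mono_left nhdsWithin_le_nhds
  refine le_of_tendsto hlim (eventually_mem_nhdsWithin.mono fun ε (hε : 0 < ε) => ?_)
  have htest := IsLogSobolevTest.sq_add_const hg hM hC hε
  have h_int : Integrable (fun x => 4 * ‖fderiv ℝ g x‖ ^ 2) μ := by
    refine .of_bound ?_ (4 * C ^ 2) (ae_of_all _ fun x => ?_)
    · exact ((hg.continuous_fderiv one_ne_zero).norm.pow 2).const_mul 4 |>.aestronglyMeasurable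
    · rw [norm_of_nonneg (by positivity)]
      gcongr
      exact hC x
  have hpt : ∀ x, ‖fderiv ℝ (fun y => g y ^ 2 + ε) x‖ ^ 2 / (g x ^ 2 + ε) ≤
      4 * ‖fderiv ℝ g x‖ ^ 2 := by
    intro x
    rw [div_le_iff₀ (by positivity), norm_fderiv_sq_add_const (hg.differentiable one_ne_zero),
      mul_pow, mul_pow, sq_abs]
    nlinarith [mul_nonneg hε.le (sq_nonneg ‖fderiv ℝ g x‖)]
  calc entropy μ (fun x => g x ^ 2 + ε)
      ≤ (2 * t)⁻¹ * ∫ x, ‖fderiv ℝ (fun y => g y ^ 2 + ε) x‖ ^ 2 / (g x ^ 2 + ε) ∂μ := hμ _ htest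
    _ ≤ (2 * t)⁻¹ * ∫ x, 4 * ‖fderiv ℝ g x‖ ^ 2 ∂μ :=
        mul_le_mul_of_nonneg_left
          (integral_mono htest.integrable_norm_sq_fderiv_div h_int hpt) (by positivity)
    _ = 2 / t * ∫ x, ‖fderiv ℝ g x‖ ^ 2 ∂μ := by
        rw [integral_const_mul]
        field_simp
        norm_num

end HasLogSobolev

end HasLogSobolev

section MonotoneTransport

open Set Topology

variable {I J : Set ℝ} {h r g : ℝ → ℝ}

/-- A positive, continuous and integrable density on a subset of the line. -/
structure IsPosDensityOn (h : ℝ → ℝ) (I : Set ℝ) : Prop where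
  continuousOn : ContinuousOn h I
  integrableOn : IntegrableOn h I
  pos : ∀ x ∈ I, 0 < h x

/-- The distribution function of the density `h` on `I`. -/
def cdfOn (I : Set ℝ) (h : ℝ → ℝ) (x : ℝ) : ℝ :=
  ∫ y in Iic x, I.indicator h y

lemma cdfOn_eq_add_intervalIntegral (hI : MeasurableSet I) (hi : IntegrableOn h I) (x : ℝ) :
    cdfOn I h x = cdfOn I h 0 + ∫ y in (0 : ℝ)..x, I.indicator h y := by
  have hk : Integrable (I.indicator h) := (integrable_indicator_iff hI).2 hi
  rw [← intervalIntegral.integral_Iic_sub_Iic hk.integrableOn hk.integrableOn]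
  simp [cdfOn]

lemma continuous_cdfOn (hI : MeasurableSet I) (hi : IntegrableOn h I) :
    Continuous (cdfOn I h) := by
  have hk : Integrable (I.indicator h) := (integrable_indicator_iff hI).2 hi
  rw [funext (cdfOn_eq_add_intervalIntegral hI hi)]
  exact continuous_const.add
    (intervalIntegral.continuous_primitive (fun a b => hk.intervalIntegrable) 0)

lemma tendsto_cdfOn_atBot : Tendsto (cdfOn I h) atBot (𝓝 0) :=
  tendsto_integral_Iic_zero tendsto_id

lemma tendsto_cdfOn_atTop (hI : MeasurableSet I) (hi : IntegrableOn h I) :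
    Tendsto (cdfOn I h) atTop (𝓝 (∫ x in I, h x)) := by
  rw [← integral_indicator hI]
  exact (aecover_Iic tendsto_id).integral_tendsto_of_countably_generated
    ((integrable_indicator_iff hI).2 hi)

lemma hasDerivAt_cdfOn (hI : IsOpen I) (hi : IntegrableOn h I) (hc : ContinuousOn h I)
    {x : ℝ} (hx : x ∈ I) : HasDerivAt (cdfOn I h) (h x) x := by
  have hk : Integrable (I.indicator h) := (integrable_indicator_iff hI.measurableSet).2 hi
  have hev : I.indicator h =ᶠ[𝓝 x] h := by
    filter_upwards [hI.mem_nhds hx] with y hy using indicator_of_mem hy h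
  have hcx : ContinuousAt (I.indicator h) x :=
    (hc.continuousAt (hI.mem_nhds hx)).congr hev.symm
  have hprim := intervalIntegral.integral_hasDerivAt_right
    (hk.intervalIntegrable (a := 0) (b := x))
    hk.aestronglyMeasurable.stronglyMeasurableAtFilter hcx
  rw [indicator_of_mem hx] at hprim
  rw [funext (cdfOn_eq_add_intervalIntegral hI.measurableSet hi)]
  exact hprim.const_add _

namespace IsPosDensityOn

lemma strictMonoOn_cdfOn (hh : IsPosDensityOn h I) (hI : IsOpen I) (hoc : I.OrdConnected) :
    StrictMonoOn (cdfOn I h) I := by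
  refine strictMonoOn_of_deriv_pos hoc.convex
    (continuous_cdfOn hI.measurableSet hh.integrableOn).continuousOn fun x hx => ?_
  rw [hI.interior_eq] at hx
  rw [(hasDerivAt_cdfOn hI hh.integrableOn hh.continuousOn hx).deriv]
  exact hh.pos x hx

lemma cdfOn_mem_Ioo (hh : IsPosDensityOn h I) (hI : IsOpen I) (hoc : I.OrdConnected) {x : ℝ}
    (hx : x ∈ I) : cdfOn I h x ∈ Ioo 0 (∫ y in I, h y) := by
  have hk : Integrable (I.indicator h) := (integrable_indicator_iff hI.measurableSet).2
    hh.integrableOn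
  have hk0 : ∀ y, 0 ≤ I.indicator h y := indicator_nonneg fun y hy => (hh.pos y hy).le
  have hmono := hh.strictMonoOn_cdfOn hI hoc
  have hIx : ∀ᶠ y in 𝓝 x, y ∈ I := hI.mem_nhds hx
  obtain ⟨y, hyI, hyx⟩ := ((hIx.filter_mono nhdsWithin_le_nhds).and
    (eventually_mem_nhdsWithin (s := Iio x))).exists
  obtain ⟨z, hzI, hxz⟩ := ((hIx.filter_mono nhdsWithin_le_nhds).and
    (eventually_mem_nhdsWithin (s := Ioi x))).exists
  constructor
  · exact (integral_nonneg hk0).trans_lt (hmono hyI hx hyx)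
  · refine (hmono hx hzI hxz).trans_le ?_
    rw [← integral_indicator hI.measurableSet]
    exact setIntegral_le_integral hk (ae_of_all _ hk0)

end IsPosDensityOn

lemma cdfOn_eq_zero_or_eq_integral_of_notMem (hI : MeasurableSet I) (hoc : I.OrdConnected) {x : ℝ}
    (hx : x ∉ I) : cdfOn I h x = 0 ∨ cdfOn I h x = ∫ y in I, h y := by
  by_cases hlt : ∃ y ∈ I, y < x
  · obtain ⟨y, hy, hyx⟩ := hlt
    right
    rw [← integral_indicator hI]
    refine setIntegral_eq_integral_of_forall_compl_eq_zero fun z hz =>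
      indicator_of_notMem (fun hzI => hx (hoc.out hy hzI ⟨hyx.le, ?_⟩)) h
    exact (not_le.1 hz).le
  · left
    push Not at hlt
    refine setIntegral_eq_zero_of_forall_eq_zero fun z hz =>
      indicator_of_notMem (fun hzI => hx ?_) h
    rwa [le_antisymm (hlt z hzI) hz]

lemma IsPosDensityOn.image_cdfOn (hh : IsPosDensityOn h I) (hI : IsOpen I) (hoc : I.OrdConnected) :
    cdfOn I h '' I = Ioo 0 (∫ y in I, h y) := by
  refine Subset.antisymm (image_subset_iff.2 fun x hx => hh.cdfOn_mem_Ioo hI hoc hx) fun u hu => ?_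
  obtain ⟨a, ha⟩ := (tendsto_cdfOn_atBot.eventually (gt_mem_nhds hu.1)).exists
  obtain ⟨b, hb⟩ := ((tendsto_cdfOn_atTop hI.measurableSet hh.integrableOn).eventually
    (lt_mem_nhds hu.2)).exists
  obtain ⟨x, hx⟩ := mem_range_of_exists_le_of_exists_ge
    (continuous_cdfOn hI.measurableSet hh.integrableOn) ⟨a, ha.le⟩ ⟨b, hb.le⟩
  refine ⟨x, ?_, hx⟩
  by_contra hxI
  rcases cdfOn_eq_zero_or_eq_integral_of_notMem (h := h) hI.measurableSet hoc hxI with h0 | h1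
  · exact hu.1.ne' (hx.symm.trans h0)
  · exact hu.2.ne (hx.symm.trans h1)

lemma exists_hasDerivAt_rightInvOn {f f' : ℝ → ℝ} (hI : IsOpen I) (hJ : IsOpen J)
    (hmono : StrictMonoOn f I) (himage : f '' I = J) (hf : ∀ x ∈ I, HasDerivAt f (f' x) x)
    (hf' : ∀ x ∈ I, f' x ≠ 0) :
    ∃ S : ℝ → ℝ, StrictMonoOn S J ∧ S '' J = I ∧ ∀ u ∈ J, HasDerivAt S (f' (S u))⁻¹ u := by
  set S := Function.invFunOn f I
  have hS : ∀ u ∈ J, S u ∈ I ∧ f (S u) = u := by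
    rw [← himage]
    exact fun u hu => ⟨Function.invFunOn_mem hu, Function.invFunOn_eq hu⟩
  have hmonoS : StrictMonoOn S J := fun u hu v hv huv =>
    (hmono.lt_iff_lt (hS u hu).1 (hS v hv).1).1 (by rwa [(hS u hu).2, (hS v hv).2])
  have himageS : S '' J = I := by rw [← himage, hmono.injOn.leftInvOn_invFunOn.image_image]
  refine ⟨S, hmonoS, himageS, fun u hu => ?_⟩
  refine HasDerivAt.of_local_left_inverse ?_ (hf _ (hS u hu).1) (hf' _ (hS u hu).1) ?_
  · refine hmonoS.continuousAt_of_image_mem_nhds (hJ.mem_nhds hu) ?_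
    rw [himageS]
    exact hI.mem_nhds (hS u hu).1
  · exact (hJ.eventually_mem hu).mono fun v hv => (hS v hv).2

lemma exists_monotone_transport (hg : IsPosDensityOn g I) (hI : IsOpen I) (hIoc : I.OrdConnected)
    (hr : IsPosDensityOn r J) (hJ : IsOpen J) (hJoc : J.OrdConnected)
    (hmass : ∫ x in I, g x = ∫ x in J, r x) :
    ∃ T : ℝ → ℝ, StrictMonoOn T I ∧ T '' I = J ∧ ∀ x ∈ I, HasDerivAt T (g x / r (T x)) x := by
  obtain ⟨S, hSmono, hSimage, hSderiv⟩ := exists_hasDerivAt_rightInvOn hJ isOpen_Ioo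
    (hr.strictMonoOn_cdfOn hJ hJoc) (hr.image_cdfOn hJ hJoc)
    (fun x hx => hasDerivAt_cdfOn hJ hr.integrableOn hr.continuousOn hx)
    fun x hx => (hr.pos x hx).ne'
  have hG : MapsTo (cdfOn I g) I (Ioo 0 (∫ x in J, r x)) := by
    rw [← hmass]
    exact fun x hx => hg.cdfOn_mem_Ioo hI hIoc hx
  refine ⟨S ∘ cdfOn I g, hSmono.comp (hg.strictMonoOn_cdfOn hI hIoc) hG, ?_, fun x hx => ?_⟩
  · rw [image_comp, hg.image_cdfOn hI hIoc, hmass, hSimage]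
  · rw [div_eq_inv_mul]
    exact (hSderiv _ (hG hx)).comp x
      (hasDerivAt_cdfOn hI hg.integrableOn hg.continuousOn hx)

end MonotoneTransport

section BoundaryFlux

open Set Topology

variable {I : Set ℝ} {f f' g : ℝ → ℝ} {x ε : ℝ}

lemma exists_abs_lt_of_Ici_subset (hf : IntegrableOn f I) (hx : Ici x ⊆ I) (hε : 0 < ε) :
    ∃ y, x ≤ y ∧ |f y| < ε := by
  by_contra! hlarge
  have hconst : IntegrableOn (fun _ => ε) (Ici x) := by
    refine Integrable.mono (hf.mono_set hx) (by fun_prop) ?_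
    refine (ae_restrict_iff' measurableSet_Ici).2 (ae_of_all _ fun y hy => ?_)
    rw [norm_of_nonneg hε.le]
    exact hlarge y hy
  simp [integrableOn_const_iff, hε.ne'] at hconst

lemma exists_ge_abs_lt (hI : IsOpen I) (hoc : I.OrdConnected) (hf : IntegrableOn f I)
    (h0 : ∀ p ∈ frontier I, Tendsto f (𝓝[I] p) (𝓝 0)) (hx : x ∈ I) (hε : 0 < ε) :
    ∃ y ∈ I, x ≤ y ∧ |f y| < ε := by
  by_cases hb : BddAbove I
  · have hp : sSup I ∈ closure I := csSup_mem_closure ⟨x, hx⟩ hb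
    have hpI : sSup I ∉ I := fun hmem => by
      obtain ⟨y, hy, hyI⟩ := ((eventually_mem_nhdsWithin (s := Ioi (sSup I))).and
        ((hI.eventually_mem hmem).filter_mono nhdsWithin_le_nhds)).exists
      exact not_lt.2 (le_csSup hb hyI) hy
    have hxp : x < sSup I := (le_csSup hb hx).lt_of_ne fun h => hpI (h ▸ hx)
    have hsmall : ∀ᶠ y in 𝓝[I] (sSup I), |f y| < ε := by
      simpa using (h0 _ (hI.frontier_eq ▸ ⟨hp, hpI⟩)).abs.eventually (gt_mem_nhds (by simpa))
    have := mem_closure_iff_nhdsWithin_neBot.1 hp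
    obtain ⟨y, ⟨hyI, hxy⟩, hfy⟩ := ((eventually_mem_nhdsWithin.and
      ((lt_mem_nhds hxp).filter_mono nhdsWithin_le_nhds)).and hsmall).exists
    exact ⟨y, hyI, hxy.le, hfy⟩
  · have hsub : Ici x ⊆ I := fun y hxy => by
      obtain ⟨z, hz, hyz⟩ := not_bddAbove_iff.1 hb y
      exact hoc.out hx hz ⟨hxy, hyz.le⟩
    obtain ⟨y, hxy, hfy⟩ := exists_abs_lt_of_Ici_subset hf hsub hε
    exact ⟨y, hsub hxy, hxy, hfy⟩

lemma exists_le_abs_lt (hI : IsOpen I) (hoc : I.OrdConnected) (hf : IntegrableOn f I)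
    (h0 : ∀ p ∈ frontier I, Tendsto f (𝓝[I] p) (𝓝 0)) (hx : x ∈ I) (hε : 0 < ε) :
    ∃ y ∈ I, y ≤ x ∧ |f y| < ε := by
  have hfneg : IntegrableOn (fun y => f (-y)) (Neg.neg ⁻¹' I) :=
    (Measure.measurePreserving_neg volume).integrableOn_comp_preimage
      (Homeomorph.neg ℝ).measurableEmbedding |>.2 hf
  have h0neg : ∀ p ∈ frontier (Neg.neg ⁻¹' I),
      Tendsto (fun y => f (-y)) (𝓝[Neg.neg ⁻¹' I] p) (𝓝 0) := by
    intro p hp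
    rw [← Homeomorph.coe_neg, ← Homeomorph.preimage_frontier] at hp
    exact (h0 _ hp).comp
      (continuous_neg.continuousWithinAt.tendsto_nhdsWithin (mapsTo_preimage _ _))
  obtain ⟨y, hyI, hxy, hfy⟩ := exists_ge_abs_lt (x := -x) (hI.preimage continuous_neg)
    (hoc.preimage_anti fun _ _ => neg_le_neg) hfneg h0neg (by simpa) hε
  exact ⟨-y, hyI, neg_le.1 hxy, hfy⟩

lemma setIntegral_Icc_le_of_le_deriv (hoc : I.OrdConnected) (hd : ∀ x ∈ I, HasDerivAt f (f' x) x)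
    (hg : IntegrableOn g I) (hgf : ∀ x ∈ I, g x ≤ f' x) {a b : ℝ} (ha : a ∈ I) (hb : b ∈ I) :
    ∫ x in Icc a b, g x ∂(volume.restrict I) ≤ |f a| + |f b| := by
  have hsub : Icc a b ⊆ I := hoc.out ha hb
  rw [Measure.restrict_restrict measurableSet_Icc, inter_eq_left.2 hsub]
  rcases le_total a b with hab | hba
  · rw [integral_Icc_eq_integral_Ioc, ← intervalIntegral.integral_of_le hab]
    have hftc : ∫ x in a..b, g x ≤ f b - f a :=
      intervalIntegral.integral_le_sub_of_hasDeriv_right_of_le hab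
        (fun x hx => (hd x (hsub hx)).continuousAt.continuousWithinAt)
        (fun x hx => (hd x (hsub (Ioo_subset_Icc_self hx))).hasDerivWithinAt)
        (hg.mono_set hsub) fun x hx => hgf x (hsub (Ioo_subset_Icc_self hx))
    linarith [le_abs_self (f b), neg_abs_le (f a)]
  · rw [setIntegral_measure_zero _ (by simp [hba])]
    positivity

-- Integrability of `f` rules out a flux through an infinite endpoint.
lemma setIntegral_nonpos_of_le_deriv (hI : IsOpen I) (hoc : I.OrdConnected)
    (hd : ∀ x ∈ I, HasDerivAt f (f' x) x) (hf : IntegrableOn f I)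
    (h0 : ∀ p ∈ frontier I, Tendsto f (𝓝[I] p) (𝓝 0))
    (hg : IntegrableOn g I) (hgf : ∀ x ∈ I, g x ≤ f' x) : ∫ x in I, g x ≤ 0 := by
  rcases I.eq_empty_or_nonempty with rfl | hne
  · simp
  have := hne.to_subtype
  have hcover : AECover (volume.restrict I) (atBot ×ˢ atTop)
      fun p : I × I => Icc (p.1 : ℝ) p.2 := by
    refine ⟨(ae_restrict_iff' hI.measurableSet).2 (ae_of_all _ fun x hx => ?_),
      fun _ => measurableSet_Icc⟩
    exact (eventually_le_atBot (⟨x, hx⟩ : I)).prod_mk (eventually_ge_atTop (⟨x, hx⟩ : I))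
  refine le_of_forall_pos_le_add fun ε hε => ?_
  have hbot : ∃ᶠ y : I in atBot, |f y| < ε / 2 := frequently_atBot.2 fun x =>
    let ⟨y, hy, hyx, hfy⟩ := exists_le_abs_lt hI hoc hf h0 x.2 (half_pos hε)
    ⟨⟨y, hy⟩, hyx, hfy⟩
  have htop : ∃ᶠ y : I in atTop, |f y| < ε / 2 := frequently_atTop.2 fun x =>
    let ⟨y, hy, hxy, hfy⟩ := exists_ge_abs_lt hI hoc hf h0 x.2 (half_pos hε)
    ⟨⟨y, hy⟩, hxy, hfy⟩
  refine le_of_tendsto_of_frequently (hcover.integral_tendsto_of_countably_generated hg)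
    ((frequently_prod_and.2 ⟨hbot, htop⟩).mono fun p hp => ?_)
  exact (setIntegral_Icc_le_of_le_deriv hoc hd hg hgf p.1.2 p.2.2).trans (by linarith)

end BoundaryFlux

section DensityMeasure

variable {α : Type*} [MeasureSpace α] {s : Set α} {r : α → ℝ}

/-- The measure with density `r` on the set `s`. -/
def densityMeasure (s : Set α) (r : α → ℝ) : Measure α :=
  (volume.restrict s).withDensity fun x => ENNReal.ofReal (r x)

lemma integral_densityMeasure (hs : MeasurableSet s) (hr : AEMeasurable r (volume.restrict s))
    (hr0 : ∀ x ∈ s, 0 ≤ r x) (f : α → ℝ) :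
    ∫ x, f x ∂(densityMeasure s r) = ∫ x in s, f x * r x := by
  rw [densityMeasure, integral_withDensity_eq_integral_toReal_smul₀ hr.ennreal_ofReal
    (ae_of_all _ fun _ => ENNReal.ofReal_lt_top)]
  refine setIntegral_congr_fun hs fun x hx => ?_
  rw [ENNReal.toReal_ofReal (hr0 x hx), smul_eq_mul, mul_comm]

lemma integrable_densityMeasure_iff (hs : MeasurableSet s)
    (hr : AEMeasurable r (volume.restrict s)) (hr0 : ∀ x ∈ s, 0 ≤ r x) {f : α → ℝ} :
    Integrable f (densityMeasure s r) ↔ IntegrableOn (fun x => f x * r x) s := by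
  rw [densityMeasure, integrable_withDensity_iff_integrable_smul₀' hr.ennreal_ofReal
    (ae_of_all _ fun _ => ENNReal.ofReal_lt_top)]
  refine integrableOn_congr_fun (fun x hx => ?_) hs
  rw [ENNReal.toReal_ofReal (hr0 x hx), smul_eq_mul, mul_comm]

lemma densityMeasure_apply (hs : MeasurableSet s) (hr : IntegrableOn r s) (hr0 : ∀ x ∈ s, 0 ≤ r x)
    {u : Set α} (hu : MeasurableSet u) :
    densityMeasure s r u = ENNReal.ofReal (∫ x in u, r x ∂(volume.restrict s)) := by
  rw [densityMeasure, withDensity_apply _ hu, ofReal_integral_eq_lintegral_ofReal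
    (hr.integrableOn (s := u)) (ae_restrict_of_ae ((ae_restrict_iff' hs).2 (ae_of_all _ hr0)))]

lemma isProbabilityMeasure_densityMeasure (hs : MeasurableSet s) (hr : IntegrableOn r s)
    (hr0 : ∀ x ∈ s, 0 ≤ r x) (hr1 : ∫ x in s, r x = 1) :
    IsProbabilityMeasure (densityMeasure s r) := by
  refine ⟨?_⟩
  rw [densityMeasure_apply hs hr hr0 .univ, setIntegral_univ, hr1, ENNReal.ofReal_one]

lemma pi_densityMeasure {ι : Type*} [Fintype ι] {s : ι → Set ℝ} {r : ι → ℝ → ℝ}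
    (hs : ∀ i, MeasurableSet (s i)) (hr : ∀ i, IntegrableOn (r i) (s i))
    (hr0 : ∀ i, ∀ x ∈ s i, 0 ≤ r i x) :
    Measure.pi (fun i => densityMeasure (s i) (r i)) =
      densityMeasure (Set.univ.pi s) fun x => ∏ i, r i (x i) := by
  have hfin : ∀ i, IsFiniteMeasure (densityMeasure (s i) (r i)) := fun i =>
    ⟨by rw [densityMeasure_apply (hs i) (hr i) (hr0 i) .univ]; exact ENNReal.ofReal_lt_top⟩
  have hprod : IntegrableOn (fun x : ι → ℝ => ∏ i, r i (x i)) (Set.univ.pi s) := by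
    rw [IntegrableOn, volume_pi, Measure.restrict_pi_pi]
    exact Integrable.fintype_prod hr
  refine Measure.pi_eq fun u hu => ?_
  rw [densityMeasure_apply (.univ_pi hs) hprod
    (fun x hx => Finset.prod_nonneg fun i _ => hr0 i _ (hx i trivial)) (.univ_pi hu), volume_pi,
    Measure.restrict_pi_pi, Measure.restrict_pi_pi, integral_fintype_prod_eq_prod,
    ENNReal.ofReal_prod_of_nonneg fun i _ => integral_nonneg_of_ae <| ae_restrict_of_ae <|
      (ae_restrict_iff' (hs i)).2 (ae_of_all _ (hr0 i))]
  exact Finset.prod_congr rfl fun i _ => (densityMeasure_apply (hs i) (hr i) (hr0 i) (hu i)).symm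

end DensityMeasure

section StrongLogConcave

open Set Topology

variable {I : Set ℝ} {r F T : ℝ → ℝ} {t m : ℝ}

/-- A probability density on an open interval which is strongly log-concave with modulus `t`,
vanishes at the finite endpoints and has a first moment. -/
structure IsStronglyLogConcaveOn (r : ℝ → ℝ) (t : ℝ) (I : Set ℝ) : Prop
    extends IsPosDensityOn r I where
  isOpen : IsOpen I
  differentiableAt : ∀ x ∈ I, DifferentiableAt ℝ r x
  strongConcaveOn_log : StrongConcaveOn I t fun x => log (r x)
  tendsto_frontier : ∀ p ∈ frontier I, Tendsto r (𝓝[I] p) (𝓝 0)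
  integrableOn_id_mul : IntegrableOn (fun x => x * r x) I
  integral_eq_one : ∫ x in I, r x = 1

lemma le_add_deriv_mul_of_concaveOn {f : ℝ → ℝ} {f' x y : ℝ} (hf : ConcaveOn ℝ I f)
    (hx : x ∈ I) (hy : y ∈ I) (hd : HasDerivAt f f' x) : f y ≤ f x + f' * (y - x) := by
  rcases lt_trichotomy x y with hxy | rfl | hyx
  · have hslope := hf.slope_le_of_hasDerivAt hx hy hxy hd
    rw [slope_def_field, div_le_iff₀ (sub_pos.2 hxy)] at hslope
    linarith
  · simp
  · have hslope := hf.le_slope_of_hasDerivAt hy hx hyx hd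
    rw [slope_def_field, le_div_iff₀ (sub_pos.2 hyx)] at hslope
    linarith

lemma le_add_deriv_mul_sub_of_strongConcaveOn {f : ℝ → ℝ} {f' x y : ℝ}
    (hf : StrongConcaveOn I t f) (hx : x ∈ I) (hy : y ∈ I) (hd : HasDerivAt f f' x) :
    f y ≤ f x + f' * (y - x) - t / 2 * (y - x) ^ 2 := by
  have hconc : ConcaveOn ℝ I fun z => f z + t / 2 * z ^ 2 := by
    simpa only [norm_eq_abs, sq_abs] using strongConcaveOn_iff_convex.1 hf
  have hderiv := hd.add ((hasDerivAt_pow 2 x).const_mul (t / 2))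
  linarith [le_add_deriv_mul_of_concaveOn hconc hx hy hderiv]

namespace IsStronglyLogConcaveOn

lemma ordConnected (hr : IsStronglyLogConcaveOn r t I) : I.OrdConnected :=
  hr.strongConcaveOn_log.1.ordConnected

lemma isProbabilityMeasure (hr : IsStronglyLogConcaveOn r t I) :
    IsProbabilityMeasure (densityMeasure I r) :=
  isProbabilityMeasure_densityMeasure hr.isOpen.measurableSet hr.integrableOn
    (fun x hx => (hr.pos x hx).le) hr.integral_eq_one

lemma integral_densityMeasure (hr : IsStronglyLogConcaveOn r t I) (f : ℝ → ℝ) :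
    ∫ x, f x ∂(densityMeasure I r) = ∫ x in I, f x * r x :=
  _root_.integral_densityMeasure hr.isOpen.measurableSet hr.integrableOn.1.aemeasurable
    (fun x hx => (hr.pos x hx).le) f

lemma integrable_densityMeasure_iff (hr : IsStronglyLogConcaveOn r t I) {f : ℝ → ℝ} :
    Integrable f (densityMeasure I r) ↔ IntegrableOn (fun x => f x * r x) I :=
  _root_.integrable_densityMeasure_iff hr.isOpen.measurableSet hr.integrableOn.1.aemeasurable
    fun x hx => (hr.pos x hx).le

lemma log_le (hr : IsStronglyLogConcaveOn r t I) {x y : ℝ} (hx : x ∈ I) (hy : y ∈ I) :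
    log (r y) ≤ log (r x) + deriv r x / r x * (y - x) - t / 2 * (y - x) ^ 2 :=
  le_add_deriv_mul_sub_of_strongConcaveOn hr.strongConcaveOn_log hx hy
    ((hr.differentiableAt x hx).hasDerivAt.log (hr.pos x hx).ne')

end IsStronglyLogConcaveOn

-- Here `ρ = r x`, `σ = r (T x)` and `d = T x - x`. Take the logarithm of the Monge–Ampère relation
-- `r (T x) * T' x = F x * r x / m` and bound `log T' ≤ T' - 1`; the quadratic gain `t / 2 * d ^ 2`
-- absorbs the cross term `F' * d`.
lemma mul_log_sub_mul_le {F F' ρ ρ' σ d : ℝ} (ht : 0 < t) (hF : 0 < F) (hm : 0 < m) (hρ : 0 < ρ)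
    (hσ : 0 < σ) (hcurv : log σ ≤ log ρ + ρ' / ρ * d - t / 2 * d ^ 2) :
    (F * log F - F * log m - (2 * t)⁻¹ * (F' ^ 2 / F)) * ρ ≤
      (F * ρ / (m * σ) - 1) * (F * ρ) + d * (F' * ρ + F * ρ') := by
  have hlog := log_le_sub_one_of_pos (div_pos (mul_pos hF hρ) (mul_pos hm hσ))
  rw [log_div (mul_pos hF hρ).ne' (mul_pos hm hσ).ne', log_mul hF.ne' hρ.ne',
    log_mul hm.ne' hσ.ne'] at hlog
  have hsq : 0 ≤ (F' + t * F * d) ^ 2 / (2 * t * F) := by positivity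
  have hexpand : (F' + t * F * d) ^ 2 / (2 * t * F) =
      (2 * t)⁻¹ * (F' ^ 2 / F) + F' * d + F * (t / 2 * d ^ 2) := by
    field_simp
    ring
  have hmul : F * (log F - log m) ≤
      F * (F * ρ / (m * σ) - 1 + ρ' / ρ * d - t / 2 * d ^ 2) :=
    mul_le_mul_of_nonneg_left (by linarith) hF.le
  calc (F * log F - F * log m - (2 * t)⁻¹ * (F' ^ 2 / F)) * ρ
      ≤ (F * (F * ρ / (m * σ) - 1 + ρ' / ρ * d) + F' * d) * ρ :=
        mul_le_mul_of_nonneg_right (by linarith) hρ.le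
    _ = (F * ρ / (m * σ) - 1) * (F * ρ) + d * (F' * ρ + F * ρ') := by
        field_simp
        ring

lemma exists_eventually_abs_sub_le (hoc : I.OrdConnected) (hT : StrictMonoOn T I)
    (hTI : MapsTo T I I) {p : ℝ} (hp : p ∈ closure I) (hpI : p ∉ I) :
    ∃ C, ∀ᶠ x in 𝓝[I] p, |T x - x| ≤ C := by
  obtain ⟨c, hc⟩ := closure_nonempty_iff.1 ⟨p, hp⟩
  refine ⟨|T c - p| + |c - p|, ?_⟩
  rcases (ne_of_mem_of_not_mem hc hpI).lt_or_gt with hcp | hpc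
  · have hlt : ∀ x ∈ I, x < p := fun x hx =>
      lt_of_not_ge fun hpx => hpI (hoc.out hc hx ⟨hcp.le, hpx⟩)
    filter_upwards [eventually_mem_nhdsWithin, nhdsWithin_le_nhds (lt_mem_nhds hcp)] with x hx hcx
    have hTcx := hT hc hx hcx
    rw [abs_of_neg (sub_neg.2 (hlt _ (hTI hc))), abs_of_neg (sub_neg.2 hcp), abs_le]
    constructor <;> linarith [hlt x hx, hlt _ (hTI hx)]
  · have hgt : ∀ x ∈ I, p < x := fun x hx =>
      lt_of_not_ge fun hxp => hpI (hoc.out hx hc ⟨hxp, hpc.le⟩)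
    filter_upwards [eventually_mem_nhdsWithin, nhdsWithin_le_nhds (gt_mem_nhds hpc)] with x hx hxc
    have hTxc := hT hx hc hxc
    rw [abs_of_pos (sub_pos.2 (hgt _ (hTI hc))), abs_of_pos (sub_pos.2 hpc), abs_le]
    constructor <;> linarith [hgt x hx, hgt _ (hTI hx)]

lemma tendsto_sub_mul_frontier (hr : IsStronglyLogConcaveOn r t I) (hF : IsLogSobolevTest F)
    (hT : StrictMonoOn T I) (hTI : MapsTo T I I) {p : ℝ} (hp : p ∈ frontier I) :
    Tendsto (fun x => (T x - x) * (F x * r x)) (𝓝[I] p) (𝓝 0) := by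
  obtain ⟨C, hC⟩ := exists_eventually_abs_sub_le hr.ordConnected hT hTI hp.1
    (hr.isOpen.interior_eq ▸ hp.2)
  have hFr : Tendsto (fun x => F x * r x) (𝓝[I] p) (𝓝 0) := by
    simpa using (hF.contDiff.continuous.continuousAt.mono_left nhdsWithin_le_nhds).mul
      (hr.tendsto_frontier p hp)
  exact bdd_le_mul_tendsto_zero' C hC hFr

lemma integrableOn_sub_mul (hr : IsStronglyLogConcaveOn r t I) (hF : IsLogSobolevTest F)
    (hm : 0 < m) (hT : StrictMonoOn T I) (hTI : T '' I = I)
    (hTd : ∀ x ∈ I, HasDerivAt T (F x * r x / (m * r (T x))) x) :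
    IntegrableOn (fun x => (T x - x) * (F x * r x)) I := by
  obtain ⟨a, b, -, hab⟩ := hF.exists_mem_Icc
  have hIm := hr.isOpen.measurableSet
  have hid : IntegrableOn (fun x => F x * (x * r x)) I :=
    integrable_mul_of_mem_Icc hr.integrableOn_id_mul hF.contDiff.continuous.measurable hab
  have htransport : IntegrableOn (fun x => T x * (F x * r x)) I := by
    have himage : IntegrableOn (fun y => m * (y * r y)) (T '' I) :=
      hTI.symm ▸ hr.integrableOn_id_mul.const_mul m
    rw [integrableOn_image_iff_integrableOn_abs_deriv_smul hIm
      (fun x hx => (hTd x hx).hasDerivWithinAt) hT.injOn] at himage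
    refine himage.congr_fun (fun x hx => ?_) hIm
    have hrT : 0 < r (T x) := hr.pos _ (hTI ▸ mem_image_of_mem T hx)
    have hFr : 0 < F x * r x := mul_pos (hF.pos x) (hr.pos x hx)
    simp only [smul_eq_mul]
    rw [abs_of_pos (div_pos hFr (mul_pos hm hrT))]
    field_simp
  exact (htransport.sub hid).congr_fun (fun x _ => by simp only [Pi.sub_apply]; ring) hIm

lemma integral_mul_log_sub_le (hr : IsStronglyLogConcaveOn r t I) (ht : 0 < t)
    (hF : IsLogSobolevTest F) (hm : ∫ x in I, F x * r x = m) (hm0 : 0 < m)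
    (hi : IntegrableOn
      (fun x => (F x * log (F x) - F x * log m - (2 * t)⁻¹ * (deriv F x ^ 2 / F x)) * r x) I) :
    ∫ x in I, (F x * log (F x) - F x * log m - (2 * t)⁻¹ * (deriv F x ^ 2 / F x)) * r x ≤ 0 := by
  obtain ⟨a, b, -, hab⟩ := hF.exists_mem_Icc
  have hFr : IsPosDensityOn (fun x => F x * r x) I :=
    ⟨hF.contDiff.continuous.continuousOn.mul hr.continuousOn,
      integrable_mul_of_mem_Icc hr.integrableOn hF.contDiff.continuous.measurable hab,
      fun x hx => mul_pos (hF.pos x) (hr.pos x hx)⟩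
  have hmr : IsPosDensityOn (fun x => m * r x) I :=
    ⟨hr.continuousOn.const_mul m, hr.integrableOn.const_mul m,
      fun x hx => mul_pos hm0 (hr.pos x hx)⟩
  obtain ⟨T, hT, hTI, hTd⟩ := exists_monotone_transport hFr hr.isOpen hr.ordConnected hmr
    hr.isOpen hr.ordConnected (by rw [hm, integral_const_mul, hr.integral_eq_one, mul_one])
  have hmaps : MapsTo T I I := fun x hx => hTI ▸ mem_image_of_mem T hx
  refine setIntegral_nonpos_of_le_deriv hr.isOpen hr.ordConnected
    (f := fun x => (T x - x) * (F x * r x)) (fun x hx => ?_)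
    (integrableOn_sub_mul hr hF hm0 hT hTI hTd)
    (fun p hp => tendsto_sub_mul_frontier hr hF hT hmaps hp) hi
    fun x hx => mul_log_sub_mul_le ht (hF.pos x) hm0 (hr.pos x hx) (hr.pos _ (hmaps hx))
      (hr.log_le hx (hmaps hx))
  exact ((hTd x hx).sub (hasDerivAt_id x)).mul
    ((hF.differentiable x).hasDerivAt.mul (hr.differentiableAt x hx).hasDerivAt)

lemma IsStronglyLogConcaveOn.hasLogSobolev (hr : IsStronglyLogConcaveOn r t I) (ht : 0 < t) :
    HasLogSobolev (densityMeasure I r) t := by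
  intro F hF
  have := hr.isProbabilityMeasure
  obtain ⟨a, b, ha, hab⟩ := hF.exists_mem_Icc
  have hFm := hF.contDiff.continuous.measurable
  obtain ⟨m, hm⟩ : ∃ m, m = ∫ x, F x ∂(densityMeasure I r) := ⟨_, rfl⟩
  have hm0 : 0 < m := hm ▸ ha.trans_le (integral_mem_Icc hFm hab).1
  have hFi : Integrable F (densityMeasure I r) := integrable_of_mem_Icc hFm hab
  have hFlog : Integrable (fun x => F x * log (F x)) (densityMeasure I r) :=
    integrable_comp_of_mem_Icc continuous_mul_log.continuousOn hFm hab
  have hfisher : Integrable (fun x => deriv F x ^ 2 / F x) (densityMeasure I r) := by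
    simpa only [← norm_deriv_eq_norm_fderiv, norm_eq_abs, sq_abs]
      using hF.integrable_norm_sq_fderiv_div
  have hentropy : Integrable (fun x => F x * log (F x) - F x * log m) (densityMeasure I r) :=
    hFlog.sub (hFi.mul_const _)
  have hle := integral_mul_log_sub_le hr ht hF (hm.trans (hr.integral_densityMeasure F)).symm hm0
    (hr.integrable_densityMeasure_iff.1 (hentropy.sub (hfisher.const_mul _)))
  rw [← hr.integral_densityMeasure, integral_sub hentropy (hfisher.const_mul _),
    integral_sub hFlog (hFi.mul_const _), integral_mul_const, ← hm,
    integral_const_mul] at hle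
  simp only [entropy, ← hm, ← norm_deriv_eq_norm_fderiv, norm_eq_abs, sq_abs]
  linarith

end StrongLogConcave

section MonomialGaussian

open Set Topology

/-- The factor of `monSet` in a coordinate with exponent `a`. -/
def monInterval (a : ℝ) : Set ℝ :=
  {x | 0 < a → 0 < x}

/-- The one-dimensional density `|x| ^ a * exp (-t x² / 2)`, not normalized. -/
def monGauss (a t x : ℝ) : ℝ :=
  |x| ^ a * exp (-(t / 2) * x ^ 2)

/-- The total mass of `monGauss a t` on `monInterval a`. -/
def monGaussMass (a t : ℝ) : ℝ :=
  ∫ x in monInterval a, monGauss a t x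

variable {a t x : ℝ}

lemma monInterval_zero : monInterval 0 = univ := by
  simp [monInterval]

lemma monInterval_of_pos (ha : 0 < a) : monInterval a = Ioi 0 := by
  ext x
  simp [monInterval, ha]

lemma isOpen_monInterval (ha : 0 ≤ a) : IsOpen (monInterval a) := by
  rcases ha.eq_or_lt with rfl | ha
  · simp [monInterval_zero]
  · simpa [monInterval_of_pos ha] using isOpen_Ioi

lemma monGauss_zero : monGauss 0 t = fun x => exp (-(t / 2) * x ^ 2) := by
  funext x
  simp [monGauss]

lemma monGauss_pos (ha : 0 ≤ a) (hx : x ∈ monInterval a) : 0 < monGauss a t x := by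
  rcases ha.eq_or_lt with rfl | ha
  · simp [monGauss_zero, exp_pos]
  · have : 0 < |x| := abs_pos.2 (hx ha).ne'
    unfold monGauss
    positivity

lemma continuous_monGauss (ha : 0 ≤ a) : Continuous (monGauss a t) :=
  (continuous_abs.rpow_const fun _ => Or.inr ha).mul (by fun_prop)

lemma differentiableAt_monGauss (ha : 0 ≤ a) (hx : x ∈ monInterval a) :
    DifferentiableAt ℝ (monGauss a t) x := by
  rcases ha.eq_or_lt with rfl | ha
  · rw [monGauss_zero]
    fun_prop
  · have hx0 : x ≠ 0 := (hx ha).ne'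
    exact ((differentiableAt_abs hx0).rpow_const (Or.inl (abs_ne_zero.2 hx0))).mul (by fun_prop)

lemma integrableOn_monGauss (ha : 0 ≤ a) (ht : 0 < t) :
    IntegrableOn (monGauss a t) (monInterval a) := by
  rcases ha.eq_or_lt with rfl | ha
  · rw [monInterval_zero, integrableOn_univ, monGauss_zero]
    exact integrable_exp_neg_mul_sq (half_pos ht)
  · rw [monInterval_of_pos ha]
    refine (integrableOn_rpow_mul_exp_neg_mul_sq (half_pos ht) (s := a) (by linarith)).congr_fun
      (fun x hx => ?_) measurableSet_Ioi
    rw [monGauss, abs_of_pos hx]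

lemma integrableOn_mul_monGauss (ha : 0 ≤ a) (ht : 0 < t) :
    IntegrableOn (fun x => x * monGauss a t x) (monInterval a) := by
  rcases ha.eq_or_lt with rfl | ha
  · rw [monInterval_zero, integrableOn_univ, monGauss_zero]
    exact integrable_mul_exp_neg_mul_sq (half_pos ht)
  · rw [monInterval_of_pos ha]
    refine (integrableOn_rpow_mul_exp_neg_mul_sq (half_pos ht) (s := a + 1)
      (by linarith)).congr_fun (fun x (hx : 0 < x) => ?_) measurableSet_Ioi
    simp only [monGauss]
    rw [abs_of_pos hx, rpow_add_one hx.ne']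
    ring

lemma monGaussMass_eq (ha : 0 ≤ a) (ht : 0 < t) :
    monGaussMass a t =
      (t / 2) ^ (-(a + 1) / 2) * (Gamma ((a + 1) / 2) / if 0 < a then 2 else 1) := by
  rcases ha.eq_or_lt with rfl | ha
  · simp only [monGaussMass, monInterval_zero, Measure.restrict_univ, monGauss_zero]
    rw [integral_gaussian, if_neg (lt_irrefl _), div_one, zero_add, Gamma_one_half_eq, neg_div,
      rpow_neg (by positivity), ← sqrt_eq_rpow, sqrt_div pi_pos.le]
    ring
  · rw [monGaussMass, monInterval_of_pos ha, if_pos ha]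
    calc ∫ x in Ioi 0, monGauss a t x
        = ∫ x in Ioi (0 : ℝ), x ^ a * exp (-(t / 2) * x ^ (2 : ℝ)) :=
          setIntegral_congr_fun measurableSet_Ioi fun x hx => by
            simp only [monGauss, abs_of_pos (mem_Ioi.1 hx), rpow_two]
      _ = (t / 2) ^ (-(a + 1) / 2) * (Gamma ((a + 1) / 2) / 2) := by
          rw [integral_rpow_mul_exp_neg_mul_rpow two_pos (by linarith) (by positivity)]
          ring

lemma monGaussMass_pos (ha : 0 ≤ a) (ht : 0 < t) : 0 < monGaussMass a t := by
  rw [monGaussMass_eq ha ht]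
  have : 0 < Gamma ((a + 1) / 2) := Gamma_pos_of_pos (by positivity)
  split_ifs <;> positivity

lemma log_monGauss (hx : x ∈ monInterval a) (ha : 0 ≤ a) :
    log (monGauss a t x) = a * log x - t / 2 * x ^ 2 := by
  rcases ha.eq_or_lt with rfl | ha
  · simp [monGauss_zero]
  · have hx0 : 0 < x := hx ha
    rw [monGauss, abs_of_pos hx0, log_mul (by positivity) (by positivity), log_rpow hx0, log_exp]
    ring

lemma concaveOn_mul_log_monInterval (ha : 0 ≤ a) :
    ConcaveOn ℝ (monInterval a) fun x => a * log x := by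
  rcases ha.eq_or_lt with rfl | ha
  · simpa [monInterval_zero] using concaveOn_const (0 : ℝ) convex_univ
  · rw [monInterval_of_pos ha]
    exact strictConcaveOn_log_Ioi.concaveOn.smul ha.le

lemma strongConcaveOn_log_const_mul_monGauss (ha : 0 ≤ a) {c : ℝ} (hc : 0 < c) :
    StrongConcaveOn (monInterval a) t fun x => log (c * monGauss a t x) := by
  rw [strongConcaveOn_iff_convex]
  refine ((concaveOn_mul_log_monInterval ha).add_const (log c)).congr fun x hx => ?_
  simp only [norm_eq_abs, sq_abs, Pi.add_apply]
  rw [log_mul hc.ne' (monGauss_pos ha hx).ne', log_monGauss hx ha]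
  ring

lemma tendsto_monGauss_frontier (ha : 0 ≤ a) {p : ℝ} (hp : p ∈ frontier (monInterval a)) :
    Tendsto (monGauss a t) (𝓝[monInterval a] p) (𝓝 0) := by
  rcases ha.eq_or_lt with rfl | ha
  · simp [monInterval_zero] at hp
  · rw [monInterval_of_pos ha, frontier_Ioi] at hp
    have hlim := (continuous_monGauss (t := t) ha.le).tendsto p
    rw [mem_singleton_iff.1 hp, monGauss, abs_zero, zero_rpow ha.ne', zero_mul] at hlim
    rw [mem_singleton_iff.1 hp]
    exact hlim.mono_left nhdsWithin_le_nhds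

/-- The probability measure on `monInterval a` proportional to `monGauss a t`. -/
def monGaussMeasure (a t : ℝ) : Measure ℝ :=
  densityMeasure (monInterval a) fun x => (monGaussMass a t)⁻¹ * monGauss a t x

lemma isStronglyLogConcaveOn_monGauss (ha : 0 ≤ a) (ht : 0 < t) :
    IsStronglyLogConcaveOn (fun x => (monGaussMass a t)⁻¹ * monGauss a t x) t
      (monInterval a) where
  continuousOn := (continuous_const.mul (continuous_monGauss ha)).continuousOn
  integrableOn := (integrableOn_monGauss ha ht).const_mul _
  pos x hx := mul_pos (inv_pos.2 (monGaussMass_pos ha ht)) (monGauss_pos ha hx)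
  isOpen := isOpen_monInterval ha
  differentiableAt x hx := (differentiableAt_monGauss ha hx).const_mul _
  strongConcaveOn_log :=
    strongConcaveOn_log_const_mul_monGauss ha (inv_pos.2 (monGaussMass_pos ha ht))
  tendsto_frontier p hp := by simpa using (tendsto_monGauss_frontier ha hp).const_mul _
  integrableOn_id_mul := by
    simpa only [IntegrableOn, mul_left_comm] using
      (integrableOn_mul_monGauss ha ht).const_mul (monGaussMass a t)⁻¹
  integral_eq_one := by
    rw [integral_const_mul]
    exact inv_mul_cancel₀ (monGaussMass_pos ha ht).ne'

variable {ι : Type*} [Fintype ι] {A : ι → ℝ}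

/-- The product of the measures `monGaussMeasure (A i) t` on Euclidean space. -/
def monGaussMeasurePi (A : ι → ℝ) (t : ℝ) : Measure (EuclideanSpace ℝ ι) :=
  (Measure.pi fun i => monGaussMeasure (A i) t).map (WithLp.toLp 2)

lemma isProbabilityMeasure_monGaussMeasure (ha : 0 ≤ a) (ht : 0 < t) :
    IsProbabilityMeasure (monGaussMeasure a t) :=
  (isStronglyLogConcaveOn_monGauss ha ht).isProbabilityMeasure

lemma isProbabilityMeasure_monGaussMeasurePi (hA : ∀ i, 0 ≤ A i) (ht : 0 < t) :
    IsProbabilityMeasure (monGaussMeasurePi A t) := by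
  have := fun i => isProbabilityMeasure_monGaussMeasure (hA i) ht
  exact Measure.isProbabilityMeasure_map (by fun_prop)

lemma hasLogSobolev_monGaussMeasurePi (hA : ∀ i, 0 ≤ A i) (ht : 0 < t) :
    HasLogSobolev (monGaussMeasurePi A t) t := by
  have := fun i => isProbabilityMeasure_monGaussMeasure (hA i) ht
  exact HasLogSobolev.map_toLp_pi
    (fun i => (isStronglyLogConcaveOn_monGauss (hA i) ht).hasLogSobolev ht) ht.le

lemma prod_monGauss (x : EuclideanSpace ℝ ι) :
    ∏ i, monGauss (A i) t (x i) = monWeight A x * exp (-(t / 2) * ‖x‖ ^ 2) := by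
  simp only [monGauss, monWeight, Finset.prod_mul_distrib, EuclideanSpace.real_norm_sq_eq,
    Finset.mul_sum, exp_sum]

lemma toLp_preimage_monSet :
    (WithLp.toLp 2 : (ι → ℝ) → EuclideanSpace ℝ ι) ⁻¹' monSet A =
      univ.pi fun i => monInterval (A i) := by
  ext x
  simp [monSet, monInterval]

lemma measurableSet_monSet (hA : ∀ i, 0 ≤ A i) : MeasurableSet (monSet A) := by
  rw [← (MeasurableEquiv.toLp 2 (ι → ℝ)).measurableSet_preimage, MeasurableEquiv.coe_toLp,
    toLp_preimage_monSet]
  exact .univ_pi fun i => (isOpen_monInterval (hA i)).measurableSet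

lemma integral_monGaussMeasurePi (hA : ∀ i, 0 ≤ A i) (ht : 0 < t) (h : EuclideanSpace ℝ ι → ℝ) :
    ∫ x, h x ∂(monGaussMeasurePi A t) = (∏ i, monGaussMass (A i) t)⁻¹ *
      ∫ x in monSet A, h x * exp (-(t / 2) * ‖x‖ ^ 2) * monWeight A x := by
  have hr := fun i => isStronglyLogConcaveOn_monGauss (hA i) ht
  have hdens : ∀ x : ι → ℝ, ∏ i, (monGaussMass (A i) t)⁻¹ * monGauss (A i) t (x i) =
      (∏ i, monGaussMass (A i) t)⁻¹ *
        (monWeight A (WithLp.toLp 2 x) * exp (-(t / 2) * ‖WithLp.toLp 2 x‖ ^ 2)) := fun x => by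
    rw [Finset.prod_mul_distrib, Finset.prod_inv_distrib, ← prod_monGauss]
  have hemb : MeasurableEmbedding (WithLp.toLp 2 : (ι → ℝ) → EuclideanSpace ℝ ι) :=
    (MeasurableEquiv.toLp 2 _).measurableEmbedding
  rw [← (PiLp.volume_preserving_toLp ι).setIntegral_preimage_emb hemb, toLp_preimage_monSet,
    ← integral_const_mul, monGaussMeasurePi, hemb.integral_map]
  simp only [monGaussMeasure]
  rw [pi_densityMeasure (fun i => (hr i).isOpen.measurableSet) (fun i => (hr i).integrableOn)
    fun i x hx => ((hr i).pos x hx).le,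
    integral_densityMeasure (.univ_pi fun i => (hr i).isOpen.measurableSet) ?_
      fun x hx => Finset.prod_nonneg fun i _ => ((hr i).pos _ (hx i trivial)).le]
  · exact integral_congr_ae (ae_of_all _ fun x => by simp only [hdens]; ring)
  · exact (continuous_finsetProd _ fun i _ => continuous_const.mul <|
      (continuous_monGauss (hA i)).comp (continuous_apply i)).aemeasurable

end MonomialGaussian

section EulerIdentity

open Set Topology Metric

variable {E : Type*} [NormedAddCommGroup E] [NormedSpace ℝ E] {h w : E → ℝ}

lemma exists_norm_fderiv_smul_apply_le (hh : ContDiff ℝ 1 h) (hs : HasCompactSupport h) :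
    ∃ r C : ℝ, ∀ R ∈ Ioo (1 / 2 : ℝ) 2, ∀ x,
      ‖fderiv ℝ h (R • x) x‖ ≤ (closedBall 0 r).indicator (fun _ => C) x := by
  obtain ⟨C, hC⟩ := (hh.continuous_fderiv one_ne_zero).bounded_above_of_compact_support
    (hs.fderiv (𝕜 := ℝ))
  have hC0 : 0 ≤ C := (norm_nonneg _).trans (hC 0)
  obtain ⟨r, hr⟩ := (hs.fderiv (𝕜 := ℝ)).isBounded.subset_closedBall 0
  refine ⟨2 * r, C * (2 * r), fun R hR x => ?_⟩
  by_cases hx : x ∈ closedBall 0 (2 * r)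
  · rw [indicator_of_mem hx]
    calc ‖fderiv ℝ h (R • x) x‖ ≤ ‖fderiv ℝ h (R • x)‖ * ‖x‖ := ContinuousLinearMap.le_opNorm _ _
      _ ≤ C * (2 * r) := by gcongr; exacts [hC _, mem_closedBall_zero_iff.1 hx]
  · have hzero : fderiv ℝ h (R • x) = 0 := by
      refine image_eq_zero_of_notMem_tsupport fun hmem => hx ?_
      have hle := mem_closedBall_zero_iff.1 (hr hmem)
      rw [norm_smul, norm_of_nonneg (by linarith [hR.1])] at hle
      rw [mem_closedBall_zero_iff]
      nlinarith [hR.1, norm_nonneg x]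
    rw [indicator_of_notMem hx, hzero, zero_apply, norm_zero]

lemma hasDerivAt_integral_comp_smul_mul [FiniteDimensional ℝ E] [MeasurableSpace E]
    [BorelSpace E] {μ : Measure E} [IsFiniteMeasureOnCompacts μ] (hh : ContDiff ℝ 1 h)
    (hs : HasCompactSupport h) (hw : Continuous w) :
    HasDerivAt (fun R : ℝ => ∫ x, h (R • x) * w x ∂μ) (∫ x, fderiv ℝ h x x * w x ∂μ) 1 := by
  have := FiniteDimensional.proper_real E
  have hc := hh.continuous
  have := hh.continuous_fderiv one_ne_zero
  obtain ⟨r, C, hC⟩ := exists_norm_fderiv_smul_apply_le hh hs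
  have hder : ∀ x (R : ℝ), HasDerivAt (fun R : ℝ => h (R • x)) (fderiv ℝ h (R • x) x) R :=
    fun x R => (hh.differentiable one_ne_zero _).hasFDerivAt.comp_hasDerivAt R
      (by simpa using (hasDerivAt_id R).smul_const x)
  have h_int : Integrable (fun x => h x * w x) μ :=
    (hc.mul hw).integrable_of_hasCompactSupport hs.mul_right
  have hbound : Integrable (fun x => (closedBall 0 r).indicator (fun _ => C) x * ‖w x‖) μ :=
    ((integrable_indicator_iff measurableSet_closedBall).2
      ((continuous_const.mul hw.norm).continuousOn.integrableOn_compact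
        (isCompact_closedBall _ _))).congr (ae_of_all _ fun _ => indicator_mul_left _ _ _)
  simpa only [one_smul] using (hasDerivAt_integral_of_dominated_loc_of_deriv_le
    (F := fun (R : ℝ) x => h (R • x) * w x) (F' := fun (R : ℝ) x => fderiv ℝ h (R • x) x * w x)
    (Ioo_mem_nhds (show (1 / 2 : ℝ) < 1 by norm_num) one_lt_two)
    (Eventually.of_forall fun R => (by fun_prop : Continuous _).aestronglyMeasurable)
    (by simpa only [one_smul] using h_int)
    (by fun_prop : Continuous _).aestronglyMeasurable
    (ae_of_all _ fun x R hR => by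
      rw [norm_mul]
      exact mul_le_mul_of_nonneg_right (hC R hR x) (norm_nonneg _))
    hbound (ae_of_all _ fun x R _ => (hder x R).mul_const _)).2

variable {ι : Type*} [Fintype ι] {A : ι → ℝ}

lemma continuous_monWeight (hA : ∀ i, 0 ≤ A i) : Continuous (monWeight A) :=
  continuous_finsetProd _ fun i _ =>
    (by fun_prop : Continuous fun x : EuclideanSpace ℝ ι => |x i|).rpow_const
      fun _ => Or.inr (hA i)

lemma monWeight_nonneg (x : EuclideanSpace ℝ ι) : 0 ≤ monWeight A x :=
  Finset.prod_nonneg fun _ _ => rpow_nonneg (abs_nonneg _) _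

lemma smul_mem_monSet_iff {R : ℝ} (hR : 0 < R) {x : EuclideanSpace ℝ ι} :
    R • x ∈ monSet A ↔ x ∈ monSet A := by
  simp [monSet, hR]

lemma monWeight_smul {R : ℝ} (hR : 0 < R) (x : EuclideanSpace ℝ ι) :
    monWeight A (R • x) = R ^ (∑ i, A i) * monWeight A x := by
  simp only [monWeight, PiLp.smul_apply, smul_eq_mul, abs_mul, abs_of_pos hR,
    rpow_sum_of_pos hR, ← Finset.prod_mul_distrib, mul_rpow hR.le (abs_nonneg _)]

lemma setIntegral_monSet_comp_smul (hA : ∀ i, 0 ≤ A i) {R : ℝ} (hR : 0 < R)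
    (h : EuclideanSpace ℝ ι → ℝ) :
    ∫ x in monSet A, h (R • x) * monWeight A x =
      R ^ (-monDim A) * ∫ x in monSet A, h x * monWeight A x := by
  have hscale : ∀ x, (monSet A).indicator (fun x => h x * monWeight A x) (R • x) =
      R ^ (∑ i, A i) * (monSet A).indicator (fun x => h (R • x) * monWeight A x) x := fun x => by
    by_cases hx : x ∈ monSet A
    · rw [indicator_of_mem hx, indicator_of_mem ((smul_mem_monSet_iff hR).2 hx),
        monWeight_smul hR]
      ring
    · rw [indicator_of_notMem hx, indicator_of_notMem (mt (smul_mem_monSet_iff hR).1 hx), mul_zero]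
  have hcomp := Measure.integral_comp_smul_of_nonneg volume
    ((monSet A).indicator fun x => h x * monWeight A x) R (hR := hR.le)
  simp only [hscale] at hcomp
  rw [integral_const_mul, integral_indicator (measurableSet_monSet hA),
    integral_indicator (measurableSet_monSet hA), finrank_euclideanSpace, smul_eq_mul] at hcomp
  have hpow : R ^ (-monDim A) = (R ^ (∑ i, A i))⁻¹ * (R ^ Fintype.card ι)⁻¹ := by
    rw [monDim, rpow_neg hR.le, rpow_add hR, rpow_natCast, mul_inv, mul_comm]
  rw [hpow, mul_assoc, ← hcomp, inv_mul_cancel_left₀ (rpow_pos_of_pos hR _).ne']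

-- Differentiate the homogeneity relation `setIntegral_monSet_comp_smul` at `R = 1`.
lemma setIntegral_fderiv_self_mul_monWeight (hA : ∀ i, 0 ≤ A i) {h : EuclideanSpace ℝ ι → ℝ}
    (hh : ContDiff ℝ 1 h) (hs : HasCompactSupport h) :
    ∫ x in monSet A, fderiv ℝ h x x * monWeight A x =
      -monDim A * ∫ x in monSet A, h x * monWeight A x := by
  set J := ∫ x in monSet A, h x * monWeight A x
  have hpow : HasDerivAt (fun R : ℝ => R ^ (-monDim A) * J) (-monDim A * J) 1 := by
    simpa using (hasDerivAt_rpow_const (x := (1 : ℝ)) (p := -monDim A)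
      (Or.inl one_ne_zero)).mul_const J
  refine (hasDerivAt_integral_comp_smul_mul hh hs (continuous_monWeight hA)).unique
    (hpow.congr_of_eventuallyEq ?_)
  filter_upwards [lt_mem_nhds (zero_lt_one (α := ℝ))] with R hR
  exact setIntegral_monSet_comp_smul hA hR h

end EulerIdentity

section GroundState

section InnerProductSpace

variable {E : Type*} [NormedAddCommGroup E] {f : E → ℝ} {t : ℝ} {x : E}

/-- The ground state transform `f ↦ f * exp (t ‖x‖² / 4)`, which trades Lebesgue measure for the
Gaussian weight `exp (-t ‖x‖² / 2)`. -/
def gaussTransform (t : ℝ) (f : E → ℝ) (x : E) : ℝ :=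
  f x * exp (t / 4 * ‖x‖ ^ 2)

lemma gaussTransform_sq : gaussTransform t f x ^ 2 = f x ^ 2 * exp (t / 2 * ‖x‖ ^ 2) := by
  rw [gaussTransform, mul_pow, ← exp_nat_mul]
  ring_nf

lemma gaussTransform_sq_mul_log :
    gaussTransform t f x ^ 2 * log (gaussTransform t f x ^ 2) =
      (f x ^ 2 * log (f x ^ 2) + t / 2 * (‖x‖ ^ 2 * f x ^ 2)) * exp (t / 2 * ‖x‖ ^ 2) := by
  rw [gaussTransform_sq]
  by_cases hfx : f x = 0
  · simp [hfx]
  · rw [log_mul (by positivity) (exp_pos _).ne', log_exp]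
    ring

variable [InnerProductSpace ℝ E]

lemma contDiff_gaussTransform (hf : ContDiff ℝ 1 f) : ContDiff ℝ 1 (gaussTransform t f) :=
  hf.mul ((contDiff_const.mul (contDiff_norm_sq ℝ)).exp)

lemma norm_add_smul_innerSL_sq [CompleteSpace E] (ℓ : E →L[ℝ] ℝ) (c : ℝ) (x : E) :
    ‖ℓ + c • innerSL ℝ x‖ ^ 2 = ‖ℓ‖ ^ 2 + 2 * c * ℓ x + c ^ 2 * ‖x‖ ^ 2 := by
  obtain ⟨y, rfl⟩ := (InnerProductSpace.toDual ℝ E).surjective ℓ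
  have hdual : InnerProductSpace.toDual ℝ E y + c • innerSL ℝ x =
      InnerProductSpace.toDual ℝ E (y + c • x) := by
    ext z
    simp
  rw [hdual, LinearIsometryEquiv.norm_map, LinearIsometryEquiv.norm_map, norm_add_sq_real,
    inner_smul_right, norm_smul, mul_pow, norm_eq_abs, sq_abs, InnerProductSpace.toDual_apply_apply]
  ring

lemma norm_fderiv_gaussTransform_sq [CompleteSpace E] (hf : DifferentiableAt ℝ f x) :
    ‖fderiv ℝ (gaussTransform t f) x‖ ^ 2 =
      (‖fderiv ℝ f x‖ ^ 2 + t / 2 * fderiv ℝ (fun y => f y ^ 2) x x +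
        t ^ 2 / 4 * (‖x‖ ^ 2 * f x ^ 2)) * exp (t / 2 * ‖x‖ ^ 2) := by
  have hexp := (((hasStrictFDerivAt_norm_sq x).hasFDerivAt.const_mul (t / 4)).exp)
  have hder : fderiv ℝ (gaussTransform t f) x =
      exp (t / 4 * ‖x‖ ^ 2) • (fderiv ℝ f x + (t / 2 * f x) • innerSL ℝ x) := by
    refine (hf.hasFDerivAt.mul hexp).fderiv.trans ?_
    ext y
    simp
    ring
  have hsq : exp (t / 4 * ‖x‖ ^ 2) ^ 2 = exp (t / 2 * ‖x‖ ^ 2) := by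
    rw [← exp_nat_mul]
    ring_nf
  have hfsq : fderiv ℝ (fun y => f y ^ 2) x x = 2 * f x * fderiv ℝ f x x := by
    rw [fderiv_fun_pow 2 hf]
    simp
  rw [hder, norm_smul, mul_pow, norm_eq_abs, sq_abs, hsq, norm_add_smul_innerSL_sq, hfsq]
  ring

end InnerProductSpace

variable {ι : Type*} [Fintype ι] {A : ι → ℝ} {t : ℝ} {f h : EuclideanSpace ℝ ι → ℝ}

lemma integral_mul_exp_monGaussMeasurePi (hA : ∀ i, 0 ≤ A i) (ht : 0 < t)
    (h : EuclideanSpace ℝ ι → ℝ) :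
    ∫ x, h x * exp (t / 2 * ‖x‖ ^ 2) ∂(monGaussMeasurePi A t) =
      (∏ i, monGaussMass (A i) t)⁻¹ * ∫ x in monSet A, h x * monWeight A x := by
  rw [integral_monGaussMeasurePi hA ht]
  simp only [mul_assoc (h _), ← exp_add, neg_mul, add_neg_cancel, exp_zero, mul_one]

lemma integrableOn_mul_monWeight (hA : ∀ i, 0 ≤ A i) (hc : Continuous h)
    (hs : HasCompactSupport h) : IntegrableOn (fun x => h x * monWeight A x) (monSet A) :=
  ((hc.mul (continuous_monWeight hA)).integrable_of_hasCompactSupport hs.mul_right).integrableOn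

lemma integrableOn_norm_sq_mul_sq_mul_monWeight (hA : ∀ i, 0 ≤ A i) (hf : Continuous f)
    (hs : HasCompactSupport f) :
    IntegrableOn (fun x => ‖x‖ ^ 2 * f x ^ 2 * monWeight A x) (monSet A) :=
  integrableOn_mul_monWeight hA (by fun_prop)
    (hs.comp_left (g := fun y => y ^ 2) (zero_pow two_ne_zero)).mul_left

lemma entropy_gaussTransform_sq (hA : ∀ i, 0 ≤ A i) (ht : 0 < t) (hf : Continuous f)
    (hs : HasCompactSupport f) (hnorm : ∫ x in monSet A, f x ^ 2 * monWeight A x = 1) :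
    entropy (monGaussMeasurePi A t) (fun x => gaussTransform t f x ^ 2) =
      (∏ i, monGaussMass (A i) t)⁻¹ * ((∫ x in monSet A, f x ^ 2 * log (f x ^ 2) * monWeight A x) +
        t / 2 * (∫ x in monSet A, ‖x‖ ^ 2 * f x ^ 2 * monWeight A x) +
        log (∏ i, monGaussMass (A i) t)) := by
  have hlog : IntegrableOn (fun x => f x ^ 2 * log (f x ^ 2) * monWeight A x) (monSet A) :=
    integrableOn_mul_monWeight hA (continuous_mul_log.comp (hf.pow 2))
      (hs.comp_left (g := fun y => y ^ 2 * log (y ^ 2)) (by simp))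
  have hmom := integrableOn_norm_sq_mul_sq_mul_monWeight hA hf hs
  have hsum : ∫ x in monSet A,
      (f x ^ 2 * log (f x ^ 2) + t / 2 * (‖x‖ ^ 2 * f x ^ 2)) * monWeight A x =
        (∫ x in monSet A, f x ^ 2 * log (f x ^ 2) * monWeight A x) +
          t / 2 * ∫ x in monSet A, ‖x‖ ^ 2 * f x ^ 2 * monWeight A x := by
    simp only [add_mul, mul_assoc (t / 2)]
    rw [integral_add hlog (hmom.const_mul _), integral_const_mul]
  simp only [entropy, gaussTransform_sq_mul_log]
  simp only [gaussTransform_sq]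
  rw [integral_mul_exp_monGaussMeasurePi hA ht, integral_mul_exp_monGaussMeasurePi hA ht, hnorm,
    mul_one, log_inv, hsum]
  ring

lemma integral_norm_fderiv_gaussTransform_sq (hA : ∀ i, 0 ≤ A i) (ht : 0 < t)
    (hf : ContDiff ℝ 1 f) (hs : HasCompactSupport f) :
    ∫ x, ‖fderiv ℝ (gaussTransform t f) x‖ ^ 2 ∂(monGaussMeasurePi A t) =
      (∏ i, monGaussMass (A i) t)⁻¹ * ((∫ x in monSet A, ‖fderiv ℝ f x‖ ^ 2 * monWeight A x) -
        t / 2 * (monDim A * ∫ x in monSet A, f x ^ 2 * monWeight A x) +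
        t ^ 2 / 4 * ∫ x in monSet A, ‖x‖ ^ 2 * f x ^ 2 * monWeight A x) := by
  have hfsq : ContDiff ℝ 1 fun x => f x ^ 2 := hf.pow 2
  have hssq : HasCompactSupport fun x => f x ^ 2 :=
    hs.comp_left (g := fun y => y ^ 2) (zero_pow two_ne_zero)
  have hgrad : IntegrableOn (fun x => ‖fderiv ℝ f x‖ ^ 2 * monWeight A x) (monSet A) :=
    integrableOn_mul_monWeight hA ((hf.continuous_fderiv one_ne_zero).norm.pow 2)
      ((hs.fderiv (𝕜 := ℝ)).comp_left (g := fun ℓ => ‖ℓ‖ ^ 2) (by simp))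
  have heuler : IntegrableOn
      (fun x => fderiv ℝ (fun y => f y ^ 2) x x * monWeight A x) (monSet A) :=
    integrableOn_mul_monWeight hA
      ((hfsq.continuous_fderiv one_ne_zero).clm_apply continuous_id)
      ((hssq.fderiv (𝕜 := ℝ)).mono fun x hx hzero => hx (by simp [hzero]))
  have hmom := integrableOn_norm_sq_mul_sq_mul_monWeight hA hf.continuous hs
  have hfirst : IntegrableOn (fun x => ‖fderiv ℝ f x‖ ^ 2 * monWeight A x +
      t / 2 * (fderiv ℝ (fun y => f y ^ 2) x x * monWeight A x)) (monSet A) :=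
    hgrad.add (heuler.const_mul _)
  simp only [norm_fderiv_gaussTransform_sq (hf.differentiable one_ne_zero _)]
  rw [integral_mul_exp_monGaussMeasurePi hA ht]
  simp only [add_mul, mul_assoc (t / 2), mul_assoc (t ^ 2 / 4)]
  rw [integral_add hfirst (hmom.const_mul _), integral_add hgrad (heuler.const_mul _),
    integral_const_mul, integral_const_mul, setIntegral_fderiv_self_mul_monWeight hA hfsq hssq]
  ring

lemma logSobolev_monGaussMass (hA : ∀ i, 0 ≤ A i) (ht : 0 < t) (hf : ContDiff ℝ 1 f)
    (hs : HasCompactSupport f) (hnorm : ∫ x in monSet A, f x ^ 2 * monWeight A x = 1) :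
    ∫ x in monSet A, f x ^ 2 * log (f x ^ 2) * monWeight A x ≤
      2 / t * (∫ x in monSet A, ‖fderiv ℝ f x‖ ^ 2 * monWeight A x) - monDim A -
        log (∏ i, monGaussMass (A i) t) := by
  have := isProbabilityMeasure_monGaussMeasurePi hA ht
  have hg : ContDiff ℝ 1 (gaussTransform t f) := contDiff_gaussTransform hf
  have hgs : HasCompactSupport (gaussTransform t f) := hs.mul_right
  obtain ⟨M, hM⟩ := hg.continuous.bounded_above_of_compact_support hgs
  obtain ⟨C, hC⟩ := (hg.continuous_fderiv one_ne_zero).bounded_above_of_compact_support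
    (hgs.fderiv (𝕜 := ℝ))
  have hls := (hasLogSobolev_monGaussMeasurePi hA ht).entropy_sq_le ht hg hM hC
  rw [entropy_gaussTransform_sq hA ht hf.continuous hs hnorm,
    integral_norm_fderiv_gaussTransform_sq hA ht hf hs, hnorm, mul_left_comm,
    mul_le_mul_iff_of_pos_left
      (inv_pos.2 (Finset.prod_pos fun i _ => monGaussMass_pos (hA i) ht))] at hls
  have hexpand : ∀ e d q : ℝ, 2 / t * (e - t / 2 * (d * 1) + t ^ 2 / 4 * q) =
      2 / t * e - d + t / 2 * q := fun e d q => by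
    field_simp
    ring
  rw [hexpand] at hls
  linarith

end GroundState

section Optimization

variable {ι : Type*} [Fintype ι] {A : ι → ℝ} {t : ℝ}

lemma prod_ite_pos_two : ∏ i, (if 0 < A i then (2 : ℝ) else 1) = 2 ^ monK A := by
  rw [Finset.prod_ite, Finset.prod_const_one, mul_one, Finset.prod_const, monK,
    Nat.card_eq_fintype_card, Fintype.card_subtype]

lemma monDim_pos [Nonempty ι] (hA : ∀ i, 0 ≤ A i) : 0 < monDim A :=
  add_pos_of_pos_of_nonneg (Nat.cast_pos.2 Fintype.card_pos) (Finset.sum_nonneg fun i _ => hA i)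

lemma prod_Gamma_div_pos (hA : ∀ i, 0 ≤ A i) : 0 < (∏ i, Gamma ((A i + 1) / 2)) / 2 ^ monK A :=
  div_pos (Finset.prod_pos fun i _ => Gamma_pos_of_pos (by linarith [hA i])) (by positivity)

lemma monPi_pos (hA : ∀ i, 0 ≤ A i) : 0 < monPi A :=
  rpow_pos_of_pos (prod_Gamma_div_pos hA) _

lemma prod_monGaussMass (hA : ∀ i, 0 ≤ A i) (ht : 0 < t) :
    ∏ i, monGaussMass (A i) t =
      (t / 2) ^ (-(monDim A / 2)) * ((∏ i, Gamma ((A i + 1) / 2)) / 2 ^ monK A) := by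
  have hexp : ∑ i, -(A i + 1) / 2 = -(monDim A / 2) := by
    rw [← Finset.sum_div, Finset.sum_neg_distrib, Finset.sum_add_distrib, Finset.sum_const,
      Finset.card_univ, nsmul_one, monDim]
    ring
  simp only [monGaussMass_eq (hA _) ht, Finset.prod_mul_distrib, Finset.prod_div_distrib,
    prod_ite_pos_two, ← rpow_sum_of_pos (half_pos ht), hexp]

lemma log_prod_monGaussMass [Nonempty ι] (hA : ∀ i, 0 ≤ A i) (ht : 0 < t) :
    log (∏ i, monGaussMass (A i) t) = monDim A / 2 * (log (monPi A) - log (t / 2)) := by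
  have hD := monDim_pos hA
  have hGamma := prod_Gamma_div_pos hA
  rw [prod_monGaussMass hA ht, log_mul (rpow_pos_of_pos (half_pos ht) _).ne' hGamma.ne',
    log_rpow (half_pos ht), monPi, log_rpow hGamma]
  field_simp
  ring

-- The right-hand side of the hypothesis is minimal at `t = 4 * E / D`; for `E = 0` it is
-- unbounded below as `t → ∞`.
lemma le_log_of_forall_le {S E D P : ℝ} (hE : 0 ≤ E) (hD : 0 < D) (hP : 0 < P)
    (h : ∀ t, 0 < t → S ≤ 2 / t * E - D - D / 2 * (log P - log (t / 2))) :
    S ≤ D / 2 * log (2 / (P * exp 1 * D) * E) := by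
  rcases hE.eq_or_lt with rfl | hE
  · have hsmall := h (2 * exp (2 / D * (S - 1) + 2 + log P)) (by positivity)
    rw [mul_div_cancel_left₀ _ two_ne_zero, log_exp] at hsmall
    have hexpand : D / 2 * (2 / D * (S - 1) + 2 + log P) = S - 1 + D + D / 2 * log P := by
      field_simp
    nlinarith
  · have hopt := h (4 * E / D) (by positivity)
    have hhalf : 4 * E / D / 2 = 2 * E / D := by ring
    have hcoeff : 2 / (4 * E / D) * E = D / 2 := by
      field_simp
      norm_num
    have harg : 2 / (P * exp 1 * D) * E = 2 * E / D / (P * exp 1) := by field_simp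
    rw [hhalf, hcoeff] at hopt
    rw [harg, log_div (by positivity) (by positivity), log_mul hP.ne' (exp_pos 1).ne', log_exp]
    linarith

end Optimization

theorem logSobolev_monomial_weight_general {ι : Type*} [Fintype ι] [Nonempty ι] {A : ι → ℝ}
    (hA : ∀ i, 0 ≤ A i) {f : EuclideanSpace ℝ ι → ℝ} (hf : ContDiff ℝ 1 f)
    (hsupp : HasCompactSupport f) (hnorm : ∫ x in monSet A, f x ^ 2 * monWeight A x = 1) :
    ∫ x in monSet A, f x ^ 2 * log (f x ^ 2) * monWeight A x ≤
      monDim A / 2 *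
        log (2 / (monPi A * exp 1 * monDim A) *
          ∫ x in monSet A, ‖fderiv ℝ f x‖ ^ 2 * monWeight A x) := by
  have henergy : 0 ≤ ∫ x in monSet A, ‖fderiv ℝ f x‖ ^ 2 * monWeight A x :=
    integral_nonneg fun x => mul_nonneg (sq_nonneg _) (monWeight_nonneg x)
  refine le_log_of_forall_le henergy (monDim_pos hA) (monPi_pos hA) fun t ht => ?_
  rw [← log_prod_monGaussMass hA ht]
  exact logSobolev_monGaussMass hA ht hf hsupp hnorm

/-- the sharp logarithmic Sobolev inequality with monomial weights.
(Recall `Real.log 0 = 0`, so `|f|^2 log |f|^2` vanishes where `f = 0`.) -/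
theorem logSobolev_monomial_weight {n : ℕ} (hn : 0 < n) (A : Fin n → ℝ) (hA : ∀ i, 0 ≤ A i)
    (f : EuclideanSpace ℝ (Fin n) → ℝ) (hf : ContDiff ℝ 1 f) (hsupp : HasCompactSupport f)
    (hnorm : ∫ x in monSet A, f x ^ 2 * monWeight A x = 1) :
    ∫ x in monSet A, f x ^ 2 * log (f x ^ 2) * monWeight A x ≤
      monDim A / 2 *
        log (2 / (monPi A * exp 1 * monDim A) *
          ∫ x in monSet A, ‖fderiv ℝ f x‖ ^ 2 * monWeight A x) := by
  have : Nonempty (Fin n) := ⟨⟨0, hn⟩⟩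
  exact logSobolev_monomial_weight_general hA hf hsupp hnorm
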